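/- arXiv:2205.08910 — 2 statements merged into one kernel-verified Lean document; each statement's English description precedes it below -/
import Mathlib

section
/- Key lemma for the Wyner–Ziv strong converse: there exist sequences o₁'(n) → 0 and o₂'(n) → 0 such that, with U := (X̃^{T−1}, Ỹ_{T+1}ⁿ, M̃, T): (i) R ≥ H(X|Y) + o₁'(n) − H(X̃|Ỹ,U); (ii) 0 ≥ H(Y|X) + o₂'(n) − H(Ỹ|X̃,U); (iii) 0 ≥ I(X̃;Z̃|Ỹ,U) − H(Ỹ|X̃,U) + H(Y|X) + o₂'(n); and (iv) E[d(X̃,Z̃)] ≤ D. -/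
open Filter

noncomputable section

/-- `p` is a probability mass function on the finite alphabet `α`. -/
def IsPMF {α : Type*} [Fintype α] (p : α → ℝ) : Prop :=
  (∀ a, 0 ≤ p a) ∧ ∑ a, p a = 1

open Classical in
/-- Probability that the random variable `X` takes the value `a`, under the pmf `p`. -/
def probEq {Ω α : Type*} [Fintype Ω] (p : Ω → ℝ) (X : Ω → α) (a : α) : ℝ :=
  ∑ ω, if X ω = a then p ω else 0

/-- Shannon entropy (base 2) of the random variable `X` under the pmf `p`. -/
def entOf {Ω α : Type*} [Fintype Ω] (p : Ω → ℝ) (X : Ω → α) : ℝ :=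
  -∑ ω, p ω * Real.logb 2 (probEq p X (X ω))

/-- Conditional Shannon entropy `H(X | Y)` under the pmf `p`. -/
def condEntOf {Ω α β : Type*} [Fintype Ω] (p : Ω → ℝ) (X : Ω → α) (Y : Ω → β) : ℝ :=
  entOf p (fun ω => (X ω, Y ω)) - entOf p Y

/-- Mutual information `I(X ; Y)` under the pmf `p`. -/
def miOf {Ω α β : Type*} [Fintype Ω] (p : Ω → ℝ) (X : Ω → α) (Y : Ω → β) : ℝ :=
  entOf p X + entOf p Y - entOf p (fun ω => (X ω, Y ω))

/-- Conditional mutual information `I(X ; Y | Z)` under the pmf `p`. -/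
def condMIOf {Ω α β γ : Type*} [Fintype Ω] (p : Ω → ℝ) (X : Ω → α) (Y : Ω → β)
    (Z : Ω → γ) : ℝ :=
  condEntOf p X Z + condEntOf p Y Z - condEntOf p (fun ω => (X ω, Y ω)) Z

open Classical in
/-- Probability of the set `S` under the pmf `p`. -/
def probSet {Ω : Type*} [Fintype Ω] (p : Ω → ℝ) (S : Set Ω) : ℝ :=
  ∑ ω, if ω ∈ S then p ω else 0

open Classical in
/-- Number of occurrences of the symbol `a` in the sequence `w`. -/
def Ncount {W : Type*} {n : ℕ} (w : Fin n → W) (a : W) : ℕ :=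
  (Finset.univ.filter (fun i => w i = a)).card

/-- The strongly typical set `T_μ⁽ⁿ⁾(P)`: sequences whose empirical frequencies differ
from `P` by at most `μ` in every entry and that contain no symbol of zero probability. -/
def typicalSet {W : Type*} [Fintype W] (P : W → ℝ) (μ : ℝ) (n : ℕ) : Set (Fin n → W) :=
  {w | ∀ a, |((Ncount w a : ℝ)) / n - P a| ≤ μ ∧ (P a = 0 → Ncount w a = 0)}

/-- The typicality parameter `μ_n = n^{-1/3}`. -/
def μseq (n : ℕ) : ℝ := (n : ℝ) ^ (-(1/3 : ℝ))

/-- The i.i.d. pmf on sequences of length `n`. -/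
def iidSeq {W : Type*} [Fintype W] (P : W → ℝ) (n : ℕ) (w : Fin n → W) : ℝ :=
  ∏ i, P (w i)

/-- The i.i.d. pmf on pairs of sequences of length `n`. -/
def iidPair {X Y : Type*} [Fintype X] [Fintype Y] (P : X × Y → ℝ) (n : ℕ)
    (xy : (Fin n → X) × (Fin n → Y)) : ℝ :=
  ∏ i, P (xy.1 i, xy.2 i)

/-- A pair of sequences viewed as one sequence over the product alphabet. -/
def pairSeq {X Y : Type*} {n : ℕ} (xy : (Fin n → X) × (Fin n → Y)) : Fin n → X × Y :=
  fun i => (xy.1 i, xy.2 i)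

section WynerZivLemma

variable {X Y Z : Type*} [Fintype X] [Fintype Y] [Fintype Z]

/-- The set `D_n` of typical pairs whose reconstruction meets the distortion constraint. -/
def WZD (P : X × Y → ℝ) (d : X → Z → ℝ) (D : ℝ) {n : ℕ} {M : ℕ}
    (φ : (Fin n → X) → Fin M) (g : Fin M → (Fin n → Y) → (Fin n → Z)) :
    Set ((Fin n → X) × (Fin n → Y)) :=
  {xy | pairSeq xy ∈ typicalSet P (μseq n) n ∧
        (∑ i, d (xy.1 i) (g (φ xy.1) xy.2 i)) / n ≤ D}

/-- `Δ_n`, the probability of `D_n` under the i.i.d. source law. -/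
def WZdelta (P : X × Y → ℝ) (d : X → Z → ℝ) (D : ℝ) {n M : ℕ}
    (φ : (Fin n → X) → Fin M) (g : Fin M → (Fin n → Y) → (Fin n → Z)) : ℝ :=
  probSet (iidPair P n) (WZD P d D φ g)

open Classical in
/-- The change-of-measure pmf `P_{X̃ⁿỸⁿ}`: the i.i.d. law restricted to `D_n`, normalized. -/
def WZpt (P : X × Y → ℝ) (d : X → Z → ℝ) (D : ℝ) {n M : ℕ}
    (φ : (Fin n → X) → Fin M) (g : Fin M → (Fin n → Y) → (Fin n → Z))
    (xy : (Fin n → X) × (Fin n → Y)) : ℝ :=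
  if xy ∈ WZD P d D φ g then iidPair P n xy / WZdelta P d D φ g else 0

/-- The pmf of `((X̃ⁿ,Ỹⁿ),T)` with `T` uniform on `{1,…,n}` and independent of the rest. -/
def WZfull (P : X × Y → ℝ) (d : X → Z → ℝ) (D : ℝ) {n M : ℕ}
    (φ : (Fin n → X) → Fin M) (g : Fin M → (Fin n → Y) → (Fin n → Z))
    (ω : ((Fin n → X) × (Fin n → Y)) × Fin n) : ℝ :=
  WZpt P d D φ g ω.1 / n

/-- The single-letter random variable `X̃ = X̃_T`. -/
def WZXt {n : ℕ} (ω : ((Fin n → X) × (Fin n → Y)) × Fin n) : X := ω.1.1 ω.2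

/-- The single-letter random variable `Ỹ = Ỹ_T`. -/
def WZYt {n : ℕ} (ω : ((Fin n → X) × (Fin n → Y)) × Fin n) : Y := ω.1.2 ω.2

/-- The single-letter random variable `Z̃ = Z̃_T`. -/
def WZZt {n M : ℕ} (φ : (Fin n → X) → Fin M) (g : Fin M → (Fin n → Y) → (Fin n → Z))
    (ω : ((Fin n → X) × (Fin n → Y)) × Fin n) : Z :=
  g (φ ω.1.1) ω.1.2 ω.2

open Classical in
/-- The auxiliary random variable `U := (X̃^{T−1}, Ỹ_{T+1}ⁿ, M̃, T)`. -/
def WZU {n M : ℕ} (φ : (Fin n → X) → Fin M)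
    (ω : ((Fin n → X) × (Fin n → Y)) × Fin n) :
    (Fin n → Option X) × (Fin n → Option Y) × Fin M × Fin n :=
  ((fun i => if (i : ℕ) < (ω.2 : ℕ) then some (ω.1.1 i) else none),
   (fun i => if (ω.2 : ℕ) < (i : ℕ) then some (ω.1.2 i) else none),
   φ ω.1.1, ω.2)


lemma probEq_nonneg {Ω α : Type*} [Fintype Ω] {p : Ω → ℝ} (hp : ∀ ω, 0 ≤ p ω) (V : Ω → α)
    (a : α) : 0 ≤ probEq p V a := by
  unfold probEq
  apply Finset.sum_nonneg
  intro ω _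
  split_ifs
  · exact hp ω
  · exact le_refl _

lemma le_probEq {Ω α : Type*} [Fintype Ω] {p : Ω → ℝ} (hp : ∀ ω, 0 ≤ p ω) (V : Ω → α)
    (ω : Ω) : p ω ≤ probEq p V (V ω) := by
  classical
  unfold probEq
  have := Finset.single_le_sum (f := fun ω' => if V ω' = V ω then p ω' else 0)
    (fun ω' _ => by
      split_ifs
      · exact hp ω'
      · exact le_refl _) (Finset.mem_univ ω)
  simpa using this

lemma entOf_congr {Ω α β : Type*} [Fintype Ω] (p : Ω → ℝ) (V : Ω → α) (W : Ω → β)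
    (h : ∀ ω ω', V ω = V ω' ↔ W ω = W ω') : entOf p V = entOf p W := by
  have e : ∀ ω, probEq p V (V ω) = probEq p W (W ω) := by
    intro ω
    unfold probEq
    apply Finset.sum_congr rfl
    intro ω' _
    by_cases hh : V ω' = V ω
    · rw [if_pos hh, if_pos ((h ω' ω).1 hh)]
    · rw [if_neg hh, if_neg (fun hw => hh ((h ω' ω).2 hw))]
  unfold entOf
  simp only [e]

/-- law of the unconscious statistician -/
lemma sum_probEq_mul {Ω α : Type*} [Fintype Ω] [Fintype α] (p : Ω → ℝ) (V : Ω → α)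
    (f : α → ℝ) : ∑ ω, p ω * f (V ω) = ∑ a, probEq p V a * f a := by
  classical
  unfold probEq
  simp only [Finset.sum_mul]
  rw [Finset.sum_comm]
  apply Finset.sum_congr rfl
  intro ω _
  simp [ite_mul]

lemma sum_probEq {Ω α : Type*} [Fintype Ω] [Fintype α] (p : Ω → ℝ) (V : Ω → α) :
    ∑ a, probEq p V a = ∑ ω, p ω := by
  have := sum_probEq_mul p V (fun _ => 1)
  simpa using this.symm

lemma sum_probEq_pair {Ω α β : Type*} [Fintype Ω] [Fintype α] (p : Ω → ℝ) (A : Ω → α)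
    (C : Ω → β) (c : β) : ∑ a, probEq p (fun ω => (A ω, C ω)) (a, c) = probEq p C c := by
  classical
  unfold probEq
  rw [Finset.sum_comm]
  apply Finset.sum_congr rfl
  intro ω _
  by_cases h : C ω = c <;> simp [h]

lemma gibbs {Ω α : Type*} [Fintype Ω] [Fintype α] {p : Ω → ℝ} (hp : IsPMF p) (V : Ω → α)
    (q : α → ℝ) (hq : ∀ a, 0 ≤ q a) (hq1 : ∑ a, q a ≤ 1) (hpos : ∀ ω, 0 < p ω → 0 < q (V ω)) :
    entOf p V ≤ -∑ ω, p ω * Real.logb 2 (q (V ω)) := by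
  unfold entOf
  rw [neg_le_neg_iff, ← sub_nonneg, ← Finset.sum_sub_distrib]
  have hl2 : 0 < Real.log 2 := Real.log_pos (by norm_num)
  have key : ∀ ω, p ω * ((1 - q (V ω) / probEq p V (V ω)) / Real.log 2)
      ≤ p ω * Real.logb 2 (probEq p V (V ω)) - p ω * Real.logb 2 (q (V ω)) := by
    intro ω
    rcases (hp.1 ω).eq_or_lt with h | h
    · simp [← h]
    · have h1 := hpos ω h
      have h2 : 0 < probEq p V (V ω) := h.trans_le (le_probEq hp.1 V ω)
      rw [← mul_sub]
      apply mul_le_mul_of_nonneg_left _ h.le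
      unfold Real.logb
      rw [← sub_div]
      apply div_le_div_of_nonneg_right _ hl2.le
      have := Real.log_le_sub_one_of_pos (div_pos h1 h2)
      rw [Real.log_div h1.ne' h2.ne'] at this
      linarith
  refine le_trans ?_ (Finset.sum_le_sum fun ω _ => key ω)
  have e : ∑ ω, p ω * ((1 - q (V ω) / probEq p V (V ω)) / Real.log 2)
      = (1 - ∑ ω, p ω * (q (V ω) / probEq p V (V ω))) / Real.log 2 := by
    have h1 := hp.2
    nth_rewrite 2 [← h1]
    rw [← Finset.sum_sub_distrib, Finset.sum_div]
    apply Finset.sum_congr rfl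
    intro ω _
    ring
  rw [e]
  apply div_nonneg _ hl2.le
  rw [sum_probEq_mul p V (fun a => q a / probEq p V a)]
  have : ∑ a, probEq p V a * (q a / probEq p V a) ≤ ∑ a, q a := by
    apply Finset.sum_le_sum
    intro a _
    rcases (probEq_nonneg hp.1 V a).eq_or_lt with h | h
    · rw [← h]; simpa using hq a
    · rw [mul_div_cancel₀ _ h.ne']
  linarith

lemma probEq_pair_le {Ω α β : Type*} [Fintype Ω] {p : Ω → ℝ} (hp : ∀ ω, 0 ≤ p ω) (A : Ω → α)
    (C : Ω → β) (a : α) (c : β) : probEq p (fun ω => (A ω, C ω)) (a, c) ≤ probEq p C c := by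
  classical
  unfold probEq
  apply Finset.sum_le_sum
  intro ω _
  have := hp ω
  by_cases h : C ω = c <;> by_cases h' : A ω = a <;> simp [h, h', this]

lemma submod {Ω α β γ : Type*} [Fintype Ω] [Fintype α] [Fintype β] [Fintype γ] {p : Ω → ℝ}
    (hp : IsPMF p) (A : Ω → α) (B : Ω → β) (C : Ω → γ) :
    entOf p (fun ω => (A ω, B ω, C ω)) + entOf p C
      ≤ entOf p (fun ω => (A ω, C ω)) + entOf p (fun ω => (B ω, C ω)) := by
  have h := gibbs hp (fun ω => (A ω, B ω, C ω))
    (fun v => probEq p (fun ω => (A ω, C ω)) (v.1, v.2.2)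
      * probEq p (fun ω => (B ω, C ω)) (v.2.1, v.2.2) / probEq p C v.2.2)
    (fun v => div_nonneg (mul_nonneg (probEq_nonneg hp.1 _ _) (probEq_nonneg hp.1 _ _))
      (probEq_nonneg hp.1 _ _)) ?_ ?_
  · have e : ∀ ω, p ω * Real.logb 2 (probEq p (fun ω => (A ω, C ω)) (A ω, C ω)
      * probEq p (fun ω => (B ω, C ω)) (B ω, C ω) / probEq p C (C ω))
      = p ω * Real.logb 2 (probEq p (fun ω => (A ω, C ω)) (A ω, C ω))
        + p ω * Real.logb 2 (probEq p (fun ω => (B ω, C ω)) (B ω, C ω))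
        - p ω * Real.logb 2 (probEq p C (C ω)) := by
      intro ω
      rcases (hp.1 ω).eq_or_lt with h | h
      · simp [← h]
      · have h1 := h.trans_le (le_probEq hp.1 (fun ω => (A ω, C ω)) ω)
        have h2 := h.trans_le (le_probEq hp.1 (fun ω => (B ω, C ω)) ω)
        have h3 := h.trans_le (le_probEq hp.1 C ω)
        rw [Real.logb_div (mul_pos h1 h2).ne' h3.ne', Real.logb_mul h1.ne' h2.ne']
        ring
    simp only [e, Finset.sum_add_distrib, Finset.sum_sub_distrib] at h
    have hC : entOf p C = -∑ ω, p ω * Real.logb 2 (probEq p C (C ω)) := rfl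
    have hA : entOf p (fun ω => (A ω, C ω))
      = -∑ ω, p ω * Real.logb 2 (probEq p (fun ω => (A ω, C ω)) (A ω, C ω)) := rfl
    have hB : entOf p (fun ω => (B ω, C ω))
      = -∑ ω, p ω * Real.logb 2 (probEq p (fun ω => (B ω, C ω)) (B ω, C ω)) := rfl
    linarith
  · simp only [Fintype.sum_prod_type]
    have : ∑ a, ∑ b, ∑ c, probEq p (fun ω => (A ω, C ω)) (a, c)
        * probEq p (fun ω => (B ω, C ω)) (b, c) / probEq p C c
        = ∑ c, (∑ a, probEq p (fun ω => (A ω, C ω)) (a, c)) *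
          (∑ b, probEq p (fun ω => (B ω, C ω)) (b, c)) / probEq p C c := by
      have : ∀ a, ∑ b, ∑ c, probEq p (fun ω => (A ω, C ω)) (a, c)
        * probEq p (fun ω => (B ω, C ω)) (b, c) / probEq p C c = ∑ c, ∑ b, probEq p (fun ω => (A ω, C ω)) (a, c)
        * probEq p (fun ω => (B ω, C ω)) (b, c) / probEq p C c := fun a => Finset.sum_comm
      simp only [this]
      rw [Finset.sum_comm]
      apply Finset.sum_congr rfl
      intro c _
      rw [Finset.sum_mul_sum, Finset.sum_div]
      simp only [Finset.sum_div]
    rw [this]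
    simp only [sum_probEq_pair]
    apply le_of_eq
    rw [← hp.2, ← sum_probEq p C]
    apply Finset.sum_congr rfl
    intro c _
    rw [mul_self_div_self]
  · intro ω h
    have h1 := h.trans_le (le_probEq hp.1 (fun ω => (A ω, C ω)) ω)
    have h2 := h.trans_le (le_probEq hp.1 (fun ω => (B ω, C ω)) ω)
    have h3 := h.trans_le (le_probEq hp.1 C ω)
    exact div_pos (mul_pos h1 h2) h3

lemma entOf_pair_fin_le {Ω β : Type*} [Fintype Ω] [Fintype β] {p : Ω → ℝ}
    (hp : IsPMF p) (B : Ω → β) {M : ℕ} (hM : 0 < M) (F : Ω → Fin M) :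
    entOf p (fun ω => (B ω, F ω)) ≤ entOf p B + Real.logb 2 M := by
  have hM' : (0:ℝ) < M := by exact_mod_cast hM
  have h := gibbs hp (fun ω => (B ω, F ω)) (fun v => probEq p B v.1 / M)
    (fun v => div_nonneg (probEq_nonneg hp.1 _ _) hM'.le) ?_ ?_
  · have e : ∀ ω, p ω * Real.logb 2 (probEq p B (B ω) / M)
      = p ω * Real.logb 2 (probEq p B (B ω)) - p ω * Real.logb 2 M := by
      intro ω
      rcases (hp.1 ω).eq_or_lt with h | h
      · simp [← h]
      · have h1 := h.trans_le (le_probEq hp.1 B ω)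
        rw [Real.logb_div h1.ne' hM'.ne']
        ring
    simp only [e, Finset.sum_sub_distrib, ← Finset.sum_mul, hp.2] at h
    have hC : entOf p B = -∑ ω, p ω * Real.logb 2 (probEq p B (B ω)) := rfl
    linarith
  · simp only [Fintype.sum_prod_type, Finset.sum_const, Finset.card_univ, Fintype.card_fin,
      nsmul_eq_mul]
    apply le_of_eq
    rw [← hp.2, ← sum_probEq p B]
    apply Finset.sum_congr rfl
    intro c _
    field_simp
  · intro ω h
    exact div_pos (h.trans_le (le_probEq hp.1 B ω)) hM'

lemma entOf_time {Ω α : Type*} [Fintype Ω] {p : Ω → ℝ} (hp : IsPMF p) {n : ℕ} (hn : 0 < n)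
    (V : Ω × Fin n → α) (τ : α → Fin n) (hτ : ∀ ω, τ (V ω) = ω.2) :
    entOf (fun ω : Ω × Fin n => p ω.1 / n) V
      = (∑ i, entOf p (fun ω => V (ω, i))) / n + Real.logb 2 n := by
  classical
  have hn' : (0:ℝ) < n := by exact_mod_cast hn
  have hpr : ∀ ω i, probEq (fun ω : Ω × Fin n => p ω.1 / n) V (V (ω, i))
      = probEq p (fun ω => V (ω, i)) (V (ω, i)) / n := by
    intro ω i
    unfold probEq
    rw [Fintype.sum_prod_type, Finset.sum_div]
    apply Finset.sum_congr rfl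
    intro ω' _
    rw [Finset.sum_eq_single i]
    · split_ifs <;> simp
    · intro j _ hj
      rw [if_neg]
      intro h
      have := congrArg τ h
      rw [hτ, hτ] at this
      exact hj this
    · simp
  have e : ∀ ω i, p ω / n * Real.logb 2 (probEq p (fun ω => V (ω, i)) (V (ω, i)) / n)
      = (p ω * Real.logb 2 (probEq p (fun ω => V (ω, i)) (V (ω, i)))) / n
        - p ω * (Real.logb 2 n / n) := by
    intro ω i
    rcases (hp.1 ω).eq_or_lt with h | h
    · simp [← h]
    · have h1 := h.trans_le (le_probEq hp.1 (fun ω => V (ω, i)) ω)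
      rw [Real.logb_div h1.ne' hn'.ne']
      ring
  unfold entOf
  rw [Fintype.sum_prod_type]
  simp only [hpr, e]
  rw [Finset.sum_comm]
  simp only [Finset.sum_sub_distrib, ← Finset.sum_mul, ← Finset.sum_div, hp.2,
    Finset.sum_neg_distrib]
  simp only [Finset.sum_const, Finset.card_univ, Fintype.card_fin, nsmul_eq_mul]
  field_simp
  ring

lemma sum_eq_Ncount {W : Type*} [Fintype W] {n : ℕ} (w : Fin n → W) (l : W → ℝ) :
    ∑ i, l (w i) = ∑ a, (Ncount w a : ℝ) * l a := by
  classical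
  have : ∀ a, (Ncount w a : ℝ) = ∑ i, if w i = a then (1:ℝ) else 0 := by
    intro a
    unfold Ncount
    rw [Finset.sum_boole]
  simp only [this, Finset.sum_mul]
  rw [Finset.sum_comm]
  apply Finset.sum_congr rfl
  intro i _
  simp

lemma typ_sum {W : Type*} [Fintype W] {P : W → ℝ} {μ : ℝ} {n : ℕ} (hn : 0 < n) {w : Fin n → W}
    (hw : w ∈ typicalSet P μ n) (l : W → ℝ) :
    |∑ i, l (w i) - n * ∑ a, P a * l a| ≤ n * (μ * ∑ a, |l a|) := by
  have hn' : (0:ℝ) < n := by exact_mod_cast hn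
  rw [sum_eq_Ncount, Finset.mul_sum, ← Finset.sum_sub_distrib, Finset.mul_sum, Finset.mul_sum]
  refine (Finset.abs_sum_le_sum_abs _ _).trans (Finset.sum_le_sum fun a _ => ?_)
  have h := (hw a).1
  have e : (Ncount w a : ℝ) * l a - n * (P a * l a) = n * (((Ncount w a : ℝ) / n - P a) * l a) := by
    field_simp
  rw [e, abs_mul, abs_mul, abs_of_pos hn']
  gcongr

lemma typ_pos {W : Type*} [Fintype W] {P : W → ℝ} (hP : IsPMF P) {μ : ℝ} {n : ℕ} {w : Fin n → W}
    (hw : w ∈ typicalSet P μ n) (i : Fin n) : 0 < P (w i) := by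
  classical
  rcases (hP.1 (w i)).eq_or_lt with h | h
  · exfalso
    have := (hw (w i)).2 h.symm
    unfold Ncount at this
    rw [Finset.card_eq_zero, Finset.filter_eq_empty_iff] at this
    exact this (Finset.mem_univ i) rfl
  · exact h

lemma iidSeq_succ_sum {W : Type*} [Fintype W] (P : W → ℝ) (n : ℕ) (F : (Fin (n+1) → W) → ℝ) :
    ∑ w, iidSeq P (n+1) w * F w = ∑ a, ∑ w, P a * iidSeq P n w * F (Fin.cons a w) := by
  rw [← (Fin.consEquiv (fun _ : Fin (n+1) => W)).sum_comp, Fintype.sum_prod_type]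
  apply Finset.sum_congr rfl
  intro a _
  apply Finset.sum_congr rfl
  intro w _
  simp [Fin.consEquiv, iidSeq, Fin.prod_univ_succ]

lemma iidSeq_isPMF {W : Type*} [Fintype W] {P : W → ℝ} (hP : IsPMF P) (n : ℕ) :
    IsPMF (iidSeq P n) := by
  constructor
  · intro w
    exact Finset.prod_nonneg fun i _ => hP.1 _
  · induction n with
    | zero => simp [iidSeq]
    | succ n ih =>
      have := iidSeq_succ_sum P n (fun _ => 1)
      simp only [mul_one, ← Finset.mul_sum, ih, hP.2] at this
      exact this

lemma iidSeq_var {W : Type*} [Fintype W] {P : W → ℝ} (hP : IsPMF P) (f : W → ℝ)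
    (hf : ∑ a, P a * f a = 0) (n : ℕ) :
    ∑ w, iidSeq P n w * (∑ i, f (w i)) ^ 2 = n * ∑ a, P a * f a ^ 2 := by
  induction n with
  | zero => simp
  | succ n ih =>
    rw [iidSeq_succ_sum]
    have h1 := (iidSeq_isPMF hP n).2
    have e : ∀ a, ∑ w, P a * iidSeq P n w * (∑ i, f ((Fin.cons a w : Fin (n+1) → W) i)) ^ 2
        = P a * f a ^ 2 + (P a * f a) * (2 * ∑ w, iidSeq P n w * ∑ i, f (w i))
          + P a * (n * ∑ a, P a * f a ^ 2) := by
      intro a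
      rw [← ih]
      have : P a * f a ^ 2 = (P a * f a ^ 2) * ∑ w, iidSeq P n w := by rw [h1, mul_one]
      rw [this]
      simp only [Finset.mul_sum (s := (Finset.univ : Finset (Fin n → W)))]
      rw [← Finset.sum_add_distrib, ← Finset.sum_add_distrib]
      apply Finset.sum_congr rfl
      intro w _
      rw [Fin.sum_univ_succ]
      simp only [Fin.cons_zero, Fin.cons_succ]
      ring
    simp only [e, Finset.sum_add_distrib]
    rw [← Finset.sum_mul, ← Finset.sum_mul, hf, hP.2]
    push_cast
    ring

lemma iidSeq_atypical {W : Type*} [Fintype W] {P : W → ℝ} (hP : IsPMF P) {μ : ℝ} (hμ : 0 < μ)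
    {n : ℕ} (hn : 0 < n) :
    probSet (iidSeq P n) (typicalSet P μ n)ᶜ ≤ Fintype.card W / (n * μ ^ 2) := by
  classical
  have hn' : (0:ℝ) < n := by exact_mod_cast hn
  have hiid := iidSeq_isPMF hP n
  let f : W → W → ℝ := fun a b => (if b = a then 1 else 0) - P a
  have hf0 : ∀ a, ∑ b, P b * f a b = 0 := by
    intro a
    simp only [f, mul_sub, Finset.sum_sub_distrib, ← Finset.sum_mul, hP.2]
    simp
  have hPle : ∀ a, P a ≤ 1 := by
    intro a
    rw [← hP.2]
    exact Finset.single_le_sum (fun b _ => hP.1 b) (Finset.mem_univ a)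
  have hf2 : ∀ a, ∑ b, P b * f a b ^ 2 ≤ 1 := by
    intro a
    rw [← hP.2]
    apply Finset.sum_le_sum
    intro b _
    apply mul_le_of_le_one_right (hP.1 b)
    have h0 := hP.1 a
    have h1 := hPle a
    simp only [f]
    split_ifs <;> nlinarith
  have hfs : ∀ a (w : Fin n → W), ∑ i, f a (w i) = n * ((Ncount w a : ℝ) / n - P a) := by
    intro a w
    have : (Ncount w a : ℝ) = ∑ i, if w i = a then (1:ℝ) else 0 := by
      unfold Ncount
      rw [Finset.sum_boole]
    simp only [f, Finset.sum_sub_distrib, ← this]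
    simp
    field_simp
  have key : ∀ w, (if w ∈ (typicalSet P μ n)ᶜ then iidSeq P n w else 0)
      ≤ ∑ a, (iidSeq P n w * (∑ i, f a (w i)) ^ 2) / (n * μ) ^ 2 := by
    intro w
    have hnn : ∀ a ∈ Finset.univ, 0 ≤ (iidSeq P n w * (∑ i, f a (w i)) ^ 2) / (n * μ) ^ 2 :=
      fun a _ => div_nonneg (mul_nonneg (hiid.1 w) (sq_nonneg _)) (sq_nonneg _)
    split_ifs with h
    · rcases (hiid.1 w).eq_or_lt with h0 | h0
      · rw [← h0]; simp
      · simp only [typicalSet, Set.mem_compl_iff, Set.mem_ofPred_eq, not_forall, not_and_or] at h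
        obtain ⟨a, h⟩ := h
        rcases h with h | h
        · refine le_trans ?_ (Finset.single_le_sum hnn (Finset.mem_univ a))
          rw [le_div_iff₀ (by positivity)]
          apply mul_le_mul_of_nonneg_left _ h0.le
          rw [hfs, mul_pow, mul_pow]
          apply mul_le_mul_of_nonneg_left _ (by positivity)
          rw [← sq_abs ((Ncount w a : ℝ) / n - P a)]
          push Not at h
          gcongr
        · exfalso
          obtain ⟨hPa, hN⟩ := h
          unfold Ncount at hN
          rw [Finset.card_eq_zero, Finset.filter_eq_empty_iff] at hN
          push Not at hN
          obtain ⟨i, _, hi⟩ := hN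
          have : iidSeq P n w = 0 := Finset.prod_eq_zero (Finset.mem_univ i) (by rw [hi, hPa])
          linarith
    · exact Finset.sum_nonneg hnn
  unfold probSet
  refine (Finset.sum_le_sum fun w _ => ?_).trans (b := ∑ w, ∑ a, (iidSeq P n w * (∑ i, f a (w i)) ^ 2) / (n * μ) ^ 2) ?_
  · refine le_trans (le_of_eq ?_) (key w)
    congr!
  · rw [Finset.sum_comm]
    simp only [← Finset.sum_div, iidSeq_var hP _ (hf0 _)]
    have : ∑ a, (n:ℝ) * ∑ b, P b * f a b ^ 2 ≤ ∑ a : W, (n:ℝ) * 1 :=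
      Finset.sum_le_sum fun a _ => mul_le_mul_of_nonneg_left (hf2 a) hn'.le
    calc _ ≤ (∑ a : W, (n:ℝ) * 1) / (n * μ) ^ 2 := by gcongr
      _ = _ := by
        simp
        field_simp

lemma pair_sum {X Y : Type*} [Fintype X] [Fintype Y] (n : ℕ)
    (F : (Fin n → X × Y) → ℝ) :
    ∑ xy : (Fin n → X) × (Fin n → Y), F (pairSeq xy) = ∑ w, F w := by
  exact (Equiv.arrowProdEquivProdArrow (Fin n) (fun _ => X) (fun _ => Y)).symm.sum_comp F

lemma iidPair_eq {X Y : Type*} [Fintype X] [Fintype Y] (P : X × Y → ℝ) (n : ℕ)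
    (xy : (Fin n → X) × (Fin n → Y)) : iidPair P n xy = iidSeq P n (pairSeq xy) := rfl

lemma iidPair_isPMF {X Y : Type*} [Fintype X] [Fintype Y] {P : X × Y → ℝ} (hP : IsPMF P) (n : ℕ) :
    IsPMF (iidPair P n) :=
  ⟨fun xy => (iidSeq_isPMF hP n).1 _, by
    simp only [iidPair_eq]
    rw [pair_sum n (iidSeq P n)]
    exact (iidSeq_isPMF hP n).2⟩

lemma WZdelta_ge {X Y Z : Type*} [Fintype X] [Fintype Y] [Fintype Z] {P : X × Y → ℝ}
    (hP : IsPMF P) (d : X → Z → ℝ) (D : ℝ) {n M : ℕ} (hn : 0 < n)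
    (φ : (Fin n → X) → Fin M) (g : Fin M → (Fin n → Y) → (Fin n → Z)) :
    1 - (∑ xy : (Fin n → X) × (Fin n → Y),
        if D < (∑ i, d (xy.1 i) (g (φ xy.1) xy.2 i)) / n then iidPair P n xy else 0)
      - Fintype.card (X × Y) / (n * μseq n ^ 2) ≤ WZdelta P d D φ g := by
  classical
  have hn' : (0:ℝ) < n := by exact_mod_cast hn
  have hμ : 0 < μseq n := Real.rpow_pos_of_pos hn' _
  have h := iidSeq_atypical hP hμ hn
  unfold probSet at h
  rw [← pair_sum] at h
  have h1 := (iidPair_isPMF hP n).2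
  have h2 : ∑ xy : (Fin n → X) × (Fin n → Y), iidPair P n xy ≤
      (∑ xy : (Fin n → X) × (Fin n → Y),
        if D < (∑ i, d (xy.1 i) (g (φ xy.1) xy.2 i)) / n then iidPair P n xy else 0) +
      (∑ xy : (Fin n → X) × (Fin n → Y), if pairSeq xy ∈ (typicalSet P (μseq n) n)ᶜ then
        iidSeq P n (pairSeq xy) else 0) +
      (∑ xy : (Fin n → X) × (Fin n → Y), if xy ∈ WZD P d D φ g then iidPair P n xy else 0) := by
    rw [← Finset.sum_add_distrib, ← Finset.sum_add_distrib]
    apply Finset.sum_le_sum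
    intro xy _
    have h0 := (iidPair_isPMF hP n).1 xy
    rw [← iidPair_eq]
    by_cases ha : D < (∑ i, d (xy.1 i) (g (φ xy.1) xy.2 i)) / n
    · rw [if_pos ha]
      split_ifs <;> linarith
    · rw [if_neg ha]
      by_cases hb : pairSeq xy ∈ typicalSet P (μseq n) n
      · rw [if_pos (show xy ∈ WZD P d D φ g from ⟨hb, not_lt.1 ha⟩)]
        split_ifs <;> linarith
      · rw [if_pos (show pairSeq xy ∈ (typicalSet P (μseq n) n)ᶜ from hb)]
        split_ifs <;> linarith
  have h3 : (∑ xy : (Fin n → X) × (Fin n → Y), if pairSeq xy ∈ (typicalSet P (μseq n) n)ᶜ then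
        iidSeq P n (pairSeq xy) else 0) ≤ Fintype.card (X × Y) / (n * μseq n ^ 2) := by
    convert h
  have h4 : WZdelta P d D φ g =
    (∑ xy : (Fin n → X) × (Fin n → Y), if xy ∈ WZD P d D φ g then iidPair P n xy else 0) := by
    unfold WZdelta probSet
    congr!
  linarith

lemma mu_tendsto : Tendsto μseq atTop (nhds 0) := by
  have := (tendsto_rpow_neg_atTop (y := (1/3:ℝ)) (by norm_num)).comp
    (tendsto_natCast_atTop_atTop (R := ℝ))
  exact this

lemma nmu_tendsto (c : ℝ) : Tendsto (fun n : ℕ => c / ((n:ℝ) * μseq n ^ 2)) atTop (nhds 0) := by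
  have h := mu_tendsto.const_mul c
  rw [mul_zero] at h
  refine h.congr' ?_
  filter_upwards [eventually_gt_atTop 0] with n hn
  have hn' : (0:ℝ) < n := by exact_mod_cast hn
  have hμ : 0 < μseq n := Real.rpow_pos_of_pos hn' _
  have : (n:ℝ) * μseq n ^ 3 = 1 := by
    unfold μseq
    rw [← Real.rpow_natCast, ← Real.rpow_mul hn'.le]
    norm_num
    rw [Real.rpow_neg_one]
    exact mul_inv_cancel₀ hn'.ne'
  rw [eq_div_iff (by positivity)]
  linear_combination c * this

lemma delta_eventually {X Y Z : Type*} [Fintype X] [Fintype Y] [Fintype Z]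
    {P : X × Y → ℝ} (hP : IsPMF P)
    (d : X → Z → ℝ) (D : ℝ) (ε : ℝ) (hε1 : ε < 1)
    (M : ℕ → ℕ) (φ : ∀ n : ℕ, (Fin n → X) → Fin (M n))
    (g : ∀ n : ℕ, Fin (M n) → (Fin n → Y) → (Fin n → Z))
    (hexcess : limsup (fun n => ∑ xy : (Fin n → X) × (Fin n → Y),
        if D < (∑ i, d (xy.1 i) (g n (φ n xy.1) xy.2 i)) / n
        then iidPair P n xy else 0) atTop ≤ ε) :
    ∀ᶠ n in atTop, (1 - ε) / 4 ≤ WZdelta P d D (φ n) (g n) := by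
  have hb : ∀ n, (∑ xy : (Fin n → X) × (Fin n → Y),
        if D < (∑ i, d (xy.1 i) (g n (φ n xy.1) xy.2 i)) / n
        then iidPair P n xy else 0) ≤ 1 := by
    intro n
    rw [← (iidPair_isPMF hP n).2]
    apply Finset.sum_le_sum
    intro xy _
    have h0 := (iidPair_isPMF hP n).1 xy
    split_ifs <;> linarith
  have h1 := eventually_lt_of_limsup_lt (lt_of_le_of_lt hexcess (show ε < (1 + ε) / 2 by linarith))
    (isBoundedUnder_of ⟨1, hb⟩)
  have h2 := (nmu_tendsto (Fintype.card (X × Y))).eventually_lt_const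
    (show 0 < (1 - ε) / 4 by linarith)
  filter_upwards [h1, h2, eventually_gt_atTop 0] with n h1 h2 hn
  have := WZdelta_ge hP d D hn (φ n) (g n)
  linarith

lemma WZpt_isPMF {X Y Z : Type*} [Fintype X] [Fintype Y] [Fintype Z] {P : X × Y → ℝ}
    (hP : IsPMF P) (d : X → Z → ℝ) (D : ℝ) {n M : ℕ}
    (φ : (Fin n → X) → Fin M) (g : Fin M → (Fin n → Y) → (Fin n → Z))
    (hΔ : 0 < WZdelta P d D φ g) : IsPMF (WZpt P d D φ g) := by
  classical
  constructor
  · intro xy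
    unfold WZpt
    split_ifs
    · exact div_nonneg ((iidPair_isPMF hP n).1 xy) hΔ.le
    · exact le_refl _
  · have h : ∀ xy, WZpt P d D φ g xy
        = (if xy ∈ WZD P d D φ g then iidPair P n xy else 0) / WZdelta P d D φ g := by
      intro xy
      unfold WZpt
      split_ifs <;> simp
    simp only [h]
    rw [← Finset.sum_div]
    have h4 : WZdelta P d D φ g =
      (∑ xy : (Fin n → X) × (Fin n → Y), if xy ∈ WZD P d D φ g then iidPair P n xy else 0) := by
      unfold WZdelta probSet
      congr!
    rw [← h4, div_self hΔ.ne']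

lemma WZpt_pos_mem {X Y Z : Type*} [Fintype X] [Fintype Y] [Fintype Z] {P : X × Y → ℝ}
    (d : X → Z → ℝ) (D : ℝ) {n M : ℕ}
    (φ : (Fin n → X) → Fin M) (g : Fin M → (Fin n → Y) → (Fin n → Z))
    {xy : (Fin n → X) × (Fin n → Y)} (h : 0 < WZpt P d D φ g xy) : xy ∈ WZD P d D φ g := by
  unfold WZpt at h
  split_ifs at h with h'
  · exact h'
  · exact absurd h (lt_irrefl _)

lemma avg_typ {X Y Z : Type*} [Fintype X] [Fintype Y] [Fintype Z] {P : X × Y → ℝ}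
    (hP : IsPMF P) (d : X → Z → ℝ) (D : ℝ) {n M : ℕ} (hn : 0 < n)
    (φ : (Fin n → X) → Fin M) (g : Fin M → (Fin n → Y) → (Fin n → Z))
    (hΔ : 0 < WZdelta P d D φ g) (l : X × Y → ℝ) :
    |∑ xy, WZpt P d D φ g xy * ∑ i, l (pairSeq xy i) - n * ∑ a, P a * l a|
      ≤ n * (μseq n * ∑ a, |l a|) := by
  have hp := WZpt_isPMF hP d D φ g hΔ
  have e : ∑ xy, WZpt P d D φ g xy * ∑ i, l (pairSeq xy i) - n * ∑ a, P a * l a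
      = ∑ xy, WZpt P d D φ g xy * (∑ i, l (pairSeq xy i) - n * ∑ a, P a * l a) := by
    simp only [mul_sub, Finset.sum_sub_distrib, ← Finset.sum_mul, hp.2, one_mul]
  have e2 : n * (μseq n * ∑ a, |l a|)
      = ∑ xy, WZpt P d D φ g xy * (n * (μseq n * ∑ a, |l a|)) := by
    rw [← Finset.sum_mul, hp.2, one_mul]
  rw [e, e2]
  refine (Finset.abs_sum_le_sum_abs _ _).trans (Finset.sum_le_sum fun xy _ => ?_)
  rw [abs_mul, abs_of_nonneg (hp.1 xy)]
  rcases (hp.1 xy).eq_or_lt with h | h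
  · simp [← h]
  · exact mul_le_mul_of_nonneg_left (typ_sum hn (WZpt_pos_mem d D φ g h).1 l) h.le

lemma logb_prod_pos {n : ℕ} (f : Fin n → ℝ) (hf : ∀ i, 0 < f i) :
    Real.logb 2 (∏ i, f i) = ∑ i, Real.logb 2 (f i) :=
  Real.logb_prod (s := Finset.univ) (f := f) (b := 2) (fun i _ => (hf i).ne')

lemma probEq_id {Ω : Type*} [Fintype Ω] (p : Ω → ℝ) (ω : Ω) :
    probEq p (fun ω => ω) ω = p ω := by
  classical
  unfold probEq
  rw [Finset.sum_eq_single ω]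
  · simp
  · intro b _ hb
    simp [hb]
  · simp

lemma ent_joint_ge {X Y Z : Type*} [Fintype X] [Fintype Y] [Fintype Z] {P : X × Y → ℝ}
    (hP : IsPMF P) (d : X → Z → ℝ) (D : ℝ) {n M : ℕ} (hn : 0 < n)
    (φ : (Fin n → X) → Fin M) (g : Fin M → (Fin n → Y) → (Fin n → Z))
    (hΔ : 0 < WZdelta P d D φ g) :
    n * entOf P (fun a => a) - n * (μseq n * ∑ a, |Real.logb 2 (probEq P (fun a => a) a)|)
      + Real.logb 2 (WZdelta P d D φ g) ≤ entOf (WZpt P d D φ g) (fun xy => xy) := by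
  classical
  have hp := WZpt_isPMF hP d D φ g hΔ
  have h := avg_typ hP d D hn φ g hΔ (fun a => Real.logb 2 (probEq P (fun a => a) a))
  have h2 := (abs_le.1 h).2
  have e : ∀ xy, WZpt P d D φ g xy * Real.logb 2 (probEq (WZpt P d D φ g) (fun xy => xy) xy)
      = WZpt P d D φ g xy * ∑ i, Real.logb 2 (probEq P (fun a => a) (pairSeq xy i))
        - WZpt P d D φ g xy * Real.logb 2 (WZdelta P d D φ g) := by
    intro xy
    rcases (hp.1 xy).eq_or_lt with h | h
    · simp [← h]
    · rw [← mul_sub]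
      congr 1
      have hm := WZpt_pos_mem d D φ g h
      have hpos := fun i => typ_pos hP hm.1 i
      have : probEq (WZpt P d D φ g) (fun xy => xy) xy = iidPair P n xy / WZdelta P d D φ g := by
        rw [probEq_id]
        unfold WZpt
        rw [if_pos hm]
      have hq : ∀ a, probEq P (fun a => a) a = P a := probEq_id P
      have hprod : 0 < iidPair P n xy := Finset.prod_pos fun i _ => hpos i
      rw [this, Real.logb_div hprod.ne' hΔ.ne']
      congr 1
      simp only [hq]
      exact logb_prod_pos _ hpos
  have e1 : entOf (WZpt P d D φ g) (fun xy => xy) = -∑ xy, WZpt P d D φ g xy *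
    Real.logb 2 (probEq (WZpt P d D φ g) (fun xy => xy) xy) := rfl
  have e2 : entOf P (fun a => a) = -∑ a, P a * Real.logb 2 (probEq P (fun a => a) a) := rfl
  rw [e1, e2]
  simp only [e, Finset.sum_sub_distrib, ← Finset.sum_mul, hp.2]
  linarith

lemma ent_marg_le {X Y Z β : Type*} [Fintype X] [Fintype Y] [Fintype Z] [Fintype β]
    {P : X × Y → ℝ}
    (hP : IsPMF P) (d : X → Z → ℝ) (D : ℝ) {n M : ℕ} (hn : 0 < n)
    (φ : (Fin n → X) → Fin M) (g : Fin M → (Fin n → Y) → (Fin n → Z))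
    (hΔ : 0 < WZdelta P d D φ g) (π : X × Y → β) :
    entOf (WZpt P d D φ g) (fun xy i => π (pairSeq xy i))
      ≤ n * entOf P π + n * (μseq n * ∑ a, |Real.logb 2 (probEq P π (π a))|) := by
  classical
  have hp := WZpt_isPMF hP d D φ g hΔ
  have h := avg_typ hP d D hn φ g hΔ (fun a => Real.logb 2 (probEq P π (π a)))
  have h2 := (abs_le.1 h).1
  have hm : IsPMF (probEq P π) := ⟨probEq_nonneg hP.1 π, by rw [sum_probEq, hP.2]⟩
  have hq := iidSeq_isPMF hm n
  have hpos : ∀ xy, 0 < WZpt P d D φ g xy → ∀ i, 0 < probEq P π (π (pairSeq xy i)) := by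
    intro xy hxy i
    exact (typ_pos hP (WZpt_pos_mem d D φ g hxy).1 i).trans_le (le_probEq hP.1 π _)
  have hg := gibbs hp (fun xy i => π (pairSeq xy i)) (iidSeq (probEq P π) n) hq.1 hq.2.le
    (fun xy hxy => Finset.prod_pos fun i _ => hpos xy hxy i)
  refine hg.trans ?_
  have e : ∀ xy, WZpt P d D φ g xy *
      Real.logb 2 (iidSeq (probEq P π) n (fun i => π (pairSeq xy i)))
      = WZpt P d D φ g xy * ∑ i, Real.logb 2 (probEq P π (π (pairSeq xy i))) := by
    intro xy
    rcases (hp.1 xy).eq_or_lt with h | h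
    · simp [← h]
    · congr 1
      exact logb_prod_pos _ (hpos xy h)
  simp only [e]
  have e2 : entOf P π = -∑ a, P a * Real.logb 2 (probEq P π (π a)) := rfl
  rw [e2]
  linarith

def preS {X : Type*} {n : ℕ} (i : ℕ) (x : Fin n → X) : Fin n → Option X :=
  fun j => if (j : ℕ) < i then some (x j) else none

def sufS {Y : Type*} {n : ℕ} (i : ℕ) (y : Fin n → Y) : Fin n → Option Y :=
  fun j => if i ≤ (j : ℕ) then some (y j) else none

lemma preS_eq {X : Type*} {n : ℕ} (i : ℕ) (x x' : Fin n → X) :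
    preS i x = preS i x' ↔ ∀ j : Fin n, (j : ℕ) < i → x j = x' j := by
  unfold preS
  rw [funext_iff]
  apply forall_congr'
  intro j
  by_cases h : (j : ℕ) < i <;> simp [h]

lemma sufS_eq {Y : Type*} {n : ℕ} (i : ℕ) (x x' : Fin n → Y) :
    sufS i x = sufS i x' ↔ ∀ j : Fin n, i ≤ (j : ℕ) → x j = x' j := by
  unfold sufS
  rw [funext_iff]
  apply forall_congr'
  intro j
  by_cases h : i ≤ (j : ℕ) <;> simp [h]

lemma WZU_eq {X Y : Type*} {n M : ℕ} (φ : (Fin n → X) → Fin M) (i : Fin n)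
    (ω ω' : (Fin n → X) × (Fin n → Y)) :
    WZU φ (ω, i) = WZU φ (ω', i) ↔ (∀ j : Fin n, (j : ℕ) < i → ω.1 j = ω'.1 j) ∧
      (∀ j : Fin n, (i : ℕ) + 1 ≤ j → ω.2 j = ω'.2 j) ∧ φ ω.1 = φ ω'.1 := by
  rw [← preS_eq, ← sufS_eq]
  have : ∀ ω : (Fin n → X) × (Fin n → Y),
      WZU φ (ω, i) = (preS (i : ℕ) ω.1, sufS ((i : ℕ) + 1) ω.2, φ ω.1, i) := by
    intro ω
    unfold WZU preS sufS
    simp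
  rw [this, this]
  simp

lemma forall_lt_succ_fin {n : ℕ} (i : Fin n) (Q : Fin n → Prop) :
    (∀ j : Fin n, (j : ℕ) < (i : ℕ) + 1 → Q j) ↔ Q i ∧ ∀ j : Fin n, (j : ℕ) < i → Q j := by
  constructor
  · intro h
    exact ⟨h i (by omega), fun j hj => h j (by omega)⟩
  · rintro ⟨h1, h2⟩ j hj
    rcases Nat.lt_succ_iff_lt_or_eq.1 hj with h | h
    · exact h2 j h
    · rw [Fin.ext h]; exact h1

lemma forall_ge_fin {n : ℕ} (i : Fin n) (Q : Fin n → Prop) :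
    (∀ j : Fin n, (i : ℕ) ≤ j → Q j) ↔ Q i ∧ ∀ j : Fin n, (i : ℕ) + 1 ≤ j → Q j := by
  constructor
  · intro h
    exact ⟨h i le_rfl, fun j hj => h j (by omega)⟩
  · rintro ⟨h1, h2⟩ j hj
    rcases hj.eq_or_lt with h | h
    · rw [← Fin.ext h]; exact h1
    · exact h2 j h

lemma tele {n : ℕ} (f : ℕ → ℝ) : ∑ i : Fin n, (f ((i : ℕ) + 1) - f i) = f n - f 0 := by
  rw [Fin.sum_univ_eq_sum_range (fun i => f (i + 1) - f i) n, Finset.sum_range_sub]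

lemma chain {X Y Z : Type*} [Fintype X] [Fintype Y] [Fintype Z] {n M : ℕ} (hn : 0 < n)
    (hM : 0 < M) (φ : (Fin n → X) → Fin M) (g : Fin M → (Fin n → Y) → (Fin n → Z))
    {p : (Fin n → X) × (Fin n → Y) → ℝ} (hp : IsPMF p)
    (full : ((Fin n → X) × (Fin n → Y)) × Fin n → ℝ) (hfull : full = fun ω => p ω.1 / n) :
    (entOf p (fun ω => ω) - entOf p Prod.snd - Real.logb 2 M
      ≤ n * condEntOf full WZXt (fun ω => (WZYt ω, WZU φ ω))) ∧
    (n * condMIOf full WZXt (WZZt φ g) (fun ω => (WZYt ω, WZU φ ω))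
      ≤ n * condEntOf full WZYt (fun ω => (WZXt ω, WZU φ ω))
        - (entOf p (fun ω => ω) - entOf p Prod.fst)) ∧
    0 ≤ condMIOf full WZXt (WZZt φ g) (fun ω => (WZYt ω, WZU φ ω)) := by
  have hn' : (0:ℝ) < n := by exact_mod_cast hn
  have hfp : IsPMF full := by
    rw [hfull]
    constructor
    · intro ω
      exact div_nonneg (hp.1 _) hn'.le
    · rw [Fintype.sum_prod_type]
      simp only [Finset.sum_const, Finset.card_univ, Fintype.card_fin, nsmul_eq_mul]
      rw [← hp.2]
      apply Finset.sum_congr rfl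
      intro ω _
      field_simp
  -- the quantities
  let f : ℕ → ℝ := fun i => entOf p (fun ω => (preS i ω.1, sufS i ω.2, φ ω.1))
  let h : ℕ → ℝ := fun i => entOf p (fun ω => (preS (i+1) ω.1, sufS i ω.2, φ ω.1))
  let k : ℕ → ℝ := fun i => entOf p (fun ω => (preS i ω.1, ω.2, φ ω.1))
  let zf : Fin n → ℝ := fun i =>
    entOf p (fun ω => (g (φ ω.1) ω.2 i, preS i ω.1, sufS i ω.2, φ ω.1))
  let zh : Fin n → ℝ := fun i =>
    entOf p (fun ω => (ω.1 i, g (φ ω.1) ω.2 i, preS i ω.1, sufS i ω.2, φ ω.1))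
  have tXYU : entOf full (fun ω => (WZXt ω, WZYt ω, WZU φ ω))
      = (∑ i : Fin n, h i) / n + Real.logb 2 n := by
    rw [hfull, entOf_time hp hn _ (fun v => v.2.2.2.2.2) (fun ω => rfl)]
    congr 2
    apply Finset.sum_congr rfl
    intro i _
    apply entOf_congr
    intro ω ω'
    simp only [Prod.mk.injEq, WZXt, WZYt, WZU_eq, preS_eq, sufS_eq, forall_lt_succ_fin,
      forall_ge_fin]
    tauto
  have tYXU : entOf full (fun ω => (WZYt ω, WZXt ω, WZU φ ω))
      = (∑ i : Fin n, h i) / n + Real.logb 2 n := by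
    rw [← tXYU]
    apply entOf_congr
    intro ω ω'
    simp only [Prod.mk.injEq]
    tauto
  have tYU : entOf full (fun ω => (WZYt ω, WZU φ ω))
      = (∑ i : Fin n, f i) / n + Real.logb 2 n := by
    rw [hfull, entOf_time hp hn _ (fun v => v.2.2.2.2) (fun ω => rfl)]
    congr 2
    apply Finset.sum_congr rfl
    intro i _
    apply entOf_congr
    intro ω ω'
    simp only [Prod.mk.injEq, WZYt, WZU_eq, preS_eq, sufS_eq, forall_ge_fin]
    tauto
  have tXU : entOf full (fun ω => (WZXt ω, WZU φ ω))
      = (∑ i : Fin n, f (i + 1)) / n + Real.logb 2 n := by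
    rw [hfull, entOf_time hp hn _ (fun v => v.2.2.2.2) (fun ω => rfl)]
    congr 2
    apply Finset.sum_congr rfl
    intro i _
    apply entOf_congr
    intro ω ω'
    simp only [Prod.mk.injEq, WZXt, WZU_eq, preS_eq, sufS_eq, forall_lt_succ_fin]
    tauto
  have tZYU : entOf full (fun ω => (WZZt φ g ω, WZYt ω, WZU φ ω))
      = (∑ i : Fin n, zf i) / n + Real.logb 2 n := by
    rw [hfull, entOf_time hp hn _ (fun v => v.2.2.2.2.2) (fun ω => rfl)]
    congr 2
    apply Finset.sum_congr rfl
    intro i _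
    apply entOf_congr
    intro ω ω'
    simp only [Prod.mk.injEq, WZZt, WZYt, WZU_eq, preS_eq, sufS_eq, forall_ge_fin]
    tauto
  have tXZYU : entOf full (fun ω => ((WZXt ω, WZZt φ g ω), WZYt ω, WZU φ ω))
      = (∑ i : Fin n, zh i) / n + Real.logb 2 n := by
    rw [hfull, entOf_time hp hn _ (fun v => v.2.2.2.2.2) (fun ω => rfl)]
    congr 2
    apply Finset.sum_congr rfl
    intro i _
    apply entOf_congr
    intro ω ω'
    simp only [Prod.mk.injEq, WZXt, WZZt, WZYt, WZU_eq, preS_eq, sufS_eq, forall_ge_fin]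
    tauto
  have cX : n * condEntOf full WZXt (fun ω => (WZYt ω, WZU φ ω))
      = ∑ i : Fin n, h i - ∑ i : Fin n, f i := by
    unfold condEntOf
    rw [tXYU, tYU]
    field_simp
    ring
  have cY : n * condEntOf full WZYt (fun ω => (WZXt ω, WZU φ ω))
      = ∑ i : Fin n, h i - ∑ i : Fin n, f (i + 1) := by
    unfold condEntOf
    rw [tYXU, tXU]
    field_simp
    ring
  have cMI : n * condMIOf full WZXt (WZZt φ g) (fun ω => (WZYt ω, WZU φ ω))
      = ∑ i : Fin n, h i - ∑ i : Fin n, f i + ∑ i : Fin n, zf i - ∑ i : Fin n, zh i := by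
    unfold condMIOf condEntOf
    rw [tXYU, tYU, tZYU, tXZYU]
    field_simp
    ring
  -- endpoint values
  have kn : k n = entOf p (fun ω => ω) := by
    apply entOf_congr
    intro ω ω'
    simp only [Prod.mk.injEq, preS_eq, Prod.ext_iff]
    constructor
    · rintro ⟨h1, h2, _⟩
      exact ⟨funext fun j => h1 j j.2, h2⟩
    · rintro ⟨h1, h2⟩
      simp [h1, h2]
  have k0 : k 0 = entOf p (fun ω => (ω.2, φ ω.1)) := by
    apply entOf_congr
    intro ω ω'
    simp [preS_eq]
  have f0 : f 0 = entOf p (fun ω => (ω.2, φ ω.1)) := by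
    apply entOf_congr
    intro ω ω'
    simp only [Prod.mk.injEq, preS_eq, sufS_eq, funext_iff (f := ω.2)]
    simp
  have fn : f n = entOf p Prod.fst := by
    apply entOf_congr
    intro ω ω'
    simp only [Prod.mk.injEq, preS_eq, sufS_eq]
    constructor
    · rintro ⟨h1, _, _⟩
      exact funext fun j => h1 j j.2
    · intro h1
      refine ⟨fun j _ => by rw [h1], fun j hj => ?_, by rw [h1]⟩
      have := j.2
      omega
  -- conditioning reduces entropy
  have s1 : ∀ i : Fin n, k (i + 1) - k i ≤ h i - f i := by
    intro i
    have s := submod hp (fun ω => ω.1 i) (fun ω => ω.2)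
      (fun ω => (preS i ω.1, sufS i ω.2, φ ω.1))
    have e1 : entOf p (fun ω => (ω.1 i, ω.2, preS i ω.1, sufS i ω.2, φ ω.1)) = k (i + 1) := by
      apply entOf_congr
      intro ω ω'
      simp only [Prod.mk.injEq, preS_eq, sufS_eq, forall_lt_succ_fin]
      constructor
      · tauto
      · rintro ⟨⟨h1, h2⟩, h3, h4⟩
        simp [h1, h3, h4]
        exact h2
    have e2 : entOf p (fun ω => (ω.1 i, preS i ω.1, sufS i ω.2, φ ω.1)) = h i := by
      apply entOf_congr
      intro ω ω'
      simp only [Prod.mk.injEq, preS_eq, sufS_eq, forall_lt_succ_fin]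
      tauto
    have e3 : entOf p (fun ω => (ω.2, preS i ω.1, sufS i ω.2, φ ω.1)) = k i := by
      apply entOf_congr
      intro ω ω'
      simp only [Prod.mk.injEq, preS_eq, sufS_eq]
      constructor
      · tauto
      · rintro ⟨h1, h3, h4⟩
        simp [h3, h4]
        exact h1
    rw [e1, e2, e3] at s
    have : f i = entOf p (fun ω => (preS i ω.1, sufS i ω.2, φ ω.1)) := rfl
    linarith
  have s2 : ∀ i : Fin n, k (i + 1) - k i ≤ zh i - zf i := by
    intro i
    have s := submod hp (fun ω => ω.1 i) (fun ω => ω.2)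
      (fun ω => (g (φ ω.1) ω.2 i, preS i ω.1, sufS i ω.2, φ ω.1))
    have e1 : entOf p (fun ω => (ω.1 i, ω.2, g (φ ω.1) ω.2 i, preS i ω.1, sufS i ω.2, φ ω.1))
        = k (i + 1) := by
      apply entOf_congr
      intro ω ω'
      simp only [Prod.mk.injEq, preS_eq, sufS_eq, forall_lt_succ_fin]
      constructor
      · tauto
      · rintro ⟨⟨h1, h2⟩, h3, h4⟩
        simp [h1, h3, h4]
        exact h2
    have e3 : entOf p (fun ω => (ω.2, g (φ ω.1) ω.2 i, preS i ω.1, sufS i ω.2, φ ω.1)) = k i := by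
      apply entOf_congr
      intro ω ω'
      simp only [Prod.mk.injEq, preS_eq, sufS_eq]
      constructor
      · tauto
      · rintro ⟨h1, h3, h4⟩
        simp [h3, h4]
        exact h1
    rw [e1, e3] at s
    have a1 : zf i = entOf p (fun ω => (g (φ ω.1) ω.2 i, preS i ω.1, sufS i ω.2, φ ω.1)) := rfl
    have a2 : zh i
      = entOf p (fun ω => (ω.1 i, g (φ ω.1) ω.2 i, preS i ω.1, sufS i ω.2, φ ω.1)) := rfl
    linarith
  have t1 := Finset.sum_le_sum (s := Finset.univ) fun i _ => s1 i
  have t2 := Finset.sum_le_sum (s := Finset.univ) fun i _ => s2 i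
  rw [tele k, Finset.sum_sub_distrib, kn, k0] at t1
  rw [tele k, Finset.sum_sub_distrib, kn, k0] at t2
  have t3 := tele (n := n) f
  rw [Finset.sum_sub_distrib, fn, f0] at t3
  refine ⟨?_, ?_, ?_⟩
  · rw [cX]
    have := entOf_pair_fin_le hp (fun ω => ω.2) hM (fun ω => φ ω.1)
    have e : entOf p (fun ω => ω.2) = entOf p Prod.snd := rfl
    linarith
  · rw [cMI, cY]
    linarith
  · have s := submod hfp WZXt (WZZt φ g) (fun ω => (WZYt ω, WZU φ ω))
    have e : entOf full (fun ω => (WZXt ω, WZZt φ g ω, WZYt ω, WZU φ ω))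
      = entOf full (fun ω => ((WZXt ω, WZZt φ g ω), WZYt ω, WZU φ ω)) := by
      apply entOf_congr
      intro ω ω'
      simp only [Prod.mk.injEq]
      tauto
    rw [e] at s
    unfold condMIOf condEntOf
    linarith

lemma WZ_distortion {X Y Z : Type*} [Fintype X] [Fintype Y] [Fintype Z] {P : X × Y → ℝ}
    (hP : IsPMF P) (d : X → Z → ℝ) {D : ℝ} (hD : 0 < D) {n M : ℕ}
    (φ : (Fin n → X) → Fin M) (g : Fin M → (Fin n → Y) → (Fin n → Z)) :
    ∑ ω : ((Fin n → X) × (Fin n → Y)) × Fin n,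
            WZfull P d D φ g ω * d (WZXt ω) (WZZt φ g ω) ≤ D := by
  classical
  have hΔ0 : 0 ≤ WZdelta P d D φ g := by
    unfold WZdelta probSet
    apply Finset.sum_nonneg
    intro xy _
    have h0 := (iidPair_isPMF hP n).1 xy
    split_ifs
    · exact h0
    · exact le_refl _
  have hp : (∀ xy, 0 ≤ WZpt P d D φ g xy) ∧ ∑ xy, WZpt P d D φ g xy ≤ 1 := by
    rcases hΔ0.eq_or_lt with h | h
    · have : ∀ xy, WZpt P d D φ g xy = 0 := by
        intro xy
        unfold WZpt
        rw [← h]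
        simp
      simp [this]
    · have := WZpt_isPMF hP d D φ g h
      exact ⟨this.1, this.2.le⟩
  rw [Fintype.sum_prod_type]
  have h1 : ∀ xy, ∑ i, WZfull P d D φ g (xy, i) * d (WZXt (xy, i)) (WZZt φ g (xy, i))
      ≤ WZpt P d D φ g xy * D := by
    intro xy
    have e : ∑ i, WZfull P d D φ g (xy, i) * d (WZXt (xy, i)) (WZZt φ g (xy, i))
        = WZpt P d D φ g xy * ((∑ i, d (xy.1 i) (g (φ xy.1) xy.2 i)) / n) := by
      rw [Finset.sum_div, Finset.mul_sum]
      apply Finset.sum_congr rfl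
      intro i _
      simp only [WZfull, WZXt, WZZt]
      ring
    rw [e]
    rcases (hp.1 xy).eq_or_lt with h | h
    · simp [← h]
    · exact mul_le_mul_of_nonneg_left (WZpt_pos_mem d D φ g h).2 h.le
  refine (Finset.sum_le_sum fun xy _ => h1 xy).trans ?_
  rw [← Finset.sum_mul]
  exact mul_le_of_le_one_left hD.le hp.2

lemma tendsto_min_zero {u v : ℕ → ℝ} (hv : Tendsto v atTop (nhds 0))
    (h : ∀ᶠ n in atTop, v n ≤ u n) : Tendsto (fun n => min 0 (u n)) atTop (nhds 0) := by
  have hv' : Tendsto (fun n => min 0 (v n)) atTop (nhds 0) := by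
    have := (tendsto_const_nhds (x := (0:ℝ)) (f := (atTop : Filter ℕ))).min hv
    simpa using this
  refine tendsto_of_tendsto_of_tendsto_of_le_of_le' hv' tendsto_const_nhds ?_ ?_
  · filter_upwards [h] with n hn
    exact min_le_min_left 0 hn
  · exact Eventually.of_forall fun n => min_le_left _ _

/-- key lemma for the Wyner–Ziv strong converse. With
`U := (X̃^{T−1}, Ỹ_{T+1}ⁿ, M̃, T)`, there exist sequences `o₁'(n) → 0`, `o₂'(n) → 0`
such that (i) `R ≥ H(X|Y) + o₁'(n) − H(X̃|Ỹ,U)`; (ii) `0 ≥ H(Y|X) + o₂'(n) − H(Ỹ|X̃,U)`;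
(iii) `0 ≥ I(X̃;Z̃|Ỹ,U) − H(Ỹ|X̃,U) + H(Y|X) + o₂'(n)`; and (iv) `E[d(X̃,Z̃)] ≤ D`. -/
theorem wyner_ziv_key_lemma
    (P : X × Y → ℝ) (hP : IsPMF P)
    (d : X → Z → ℝ) (hd : ∀ x z, 0 ≤ d x z) (D : ℝ) (hD : 0 < D)
    (ε : ℝ) (hε0 : 0 ≤ ε) (hε1 : ε < 1) (R : ℝ) (hR : 0 < R)
    (M : ℕ → ℕ) (φ : ∀ n : ℕ, (Fin n → X) → Fin (M n))
    (g : ∀ n : ℕ, Fin (M n) → (Fin n → Y) → (Fin n → Z))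
    (hrate : ∀ n, (M n : ℝ) ≤ 2 ^ ((n : ℝ) * R))
    (hexcess : limsup (fun n => ∑ xy : (Fin n → X) × (Fin n → Y),
        if D < (∑ i, d (xy.1 i) (g n (φ n xy.1) xy.2 i)) / n
        then iidPair P n xy else 0) atTop ≤ ε) :
    ∃ o₁ o₂ : ℕ → ℝ,
      Tendsto o₁ atTop (nhds 0) ∧ Tendsto o₂ atTop (nhds 0) ∧
      ∀ n : ℕ,
        (condEntOf P Prod.fst Prod.snd + o₁ n
            - condEntOf (WZfull P d D (φ n) (g n)) WZXt
                (fun ω => (WZYt ω, WZU (φ n) ω)) ≤ R) ∧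
        (condEntOf P Prod.snd Prod.fst + o₂ n
            - condEntOf (WZfull P d D (φ n) (g n)) WZYt
                (fun ω => (WZXt ω, WZU (φ n) ω)) ≤ 0) ∧
        (condMIOf (WZfull P d D (φ n) (g n)) WZXt (WZZt (φ n) (g n))
              (fun ω => (WZYt ω, WZU (φ n) ω))
            - condEntOf (WZfull P d D (φ n) (g n)) WZYt
                (fun ω => (WZXt ω, WZU (φ n) ω))
            + condEntOf P Prod.snd Prod.fst + o₂ n ≤ 0) ∧
        (∑ ω : ((Fin n → X) × (Fin n → Y)) × Fin n,
            WZfull P d D (φ n) (g n) ω * d (WZXt ω) (WZZt (φ n) (g n) ω) ≤ D) := by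
  let C : ℝ := ∑ a, |Real.logb 2 (probEq P (fun a => a) a)|
  let CY : ℝ := ∑ a : X × Y, |Real.logb 2 (probEq P Prod.snd a.2)|
  let CX : ℝ := ∑ a : X × Y, |Real.logb 2 (probEq P Prod.fst a.1)|
  let δ : ℝ := (1 - ε) / 4
  have hδ : 0 < δ := by simp only [δ]; linarith
  have hne : Nonempty (X × Y) := by
    by_contra h
    rw [not_nonempty_iff] at h
    have := hP.2
    simp at this
  have hv : ∀ c : ℝ, Tendsto (fun n : ℕ => Real.logb 2 δ / n - μseq n * c) atTop (nhds 0) := by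
    intro c
    have h1 := tendsto_const_div_atTop_nhds_zero_nat (Real.logb 2 δ)
    have h2 := mu_tendsto.mul_const c
    simpa using h1.sub h2
  have hev := delta_eventually hP d D ε hε1 M φ g hexcess
  have hHX : entOf P (fun ω : X × Y => (ω.1, ω.2)) = entOf P (fun a => a) := rfl
  have hHY : entOf P (fun ω : X × Y => (ω.2, ω.1)) = entOf P (fun a => a) := by
    apply entOf_congr
    intro ω ω'
    simp only [Prod.mk.injEq, Prod.ext_iff]
    tauto
  have core : ∀ᶠ n : ℕ in atTop,
      (Real.logb 2 δ / n - μseq n * (C + CY) ≤ R - condEntOf P Prod.fst Prod.snd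
        + condEntOf (WZfull P d D (φ n) (g n)) WZXt (fun ω => (WZYt ω, WZU (φ n) ω))) ∧
      (Real.logb 2 δ / n - μseq n * (C + CX) ≤
        condEntOf (WZfull P d D (φ n) (g n)) WZYt (fun ω => (WZXt ω, WZU (φ n) ω))
        - condMIOf (WZfull P d D (φ n) (g n)) WZXt (WZZt (φ n) (g n))
              (fun ω => (WZYt ω, WZU (φ n) ω))
        - condEntOf P Prod.snd Prod.fst) ∧
      0 ≤ condMIOf (WZfull P d D (φ n) (g n)) WZXt (WZZt (φ n) (g n))
              (fun ω => (WZYt ω, WZU (φ n) ω)) := by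
    filter_upwards [hev, eventually_gt_atTop 0] with n hΔ hn
    have hn' : (0:ℝ) < n := by exact_mod_cast hn
    have hΔ' : 0 < WZdelta P d D (φ n) (g n) := hδ.trans_le hΔ
    have hM : 0 < M n := (φ n (fun _ => hne.some.1)).pos
    have hM' : (0:ℝ) < M n := by exact_mod_cast hM
    have hp := WZpt_isPMF hP d D (φ n) (g n) hΔ'
    obtain ⟨c1, c2, c3⟩ := chain hn hM (φ n) (g n) hp (WZfull P d D (φ n) (g n)) rfl
    have hJ := ent_joint_ge hP d D hn (φ n) (g n) hΔ'
    have hY := ent_marg_le hP d D hn (φ n) (g n) hΔ' Prod.snd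
    have hX := ent_marg_le hP d D hn (φ n) (g n) hΔ' Prod.fst
    have hY' : entOf (WZpt P d D (φ n) (g n)) Prod.snd ≤ n * entOf P Prod.snd + n * (μseq n * CY) :=
      hY
    have hX' : entOf (WZpt P d D (φ n) (g n)) Prod.fst ≤ n * entOf P Prod.fst + n * (μseq n * CX) :=
      hX
    have hJ' : n * entOf P (fun a => a) - n * (μseq n * C)
      + Real.logb 2 (WZdelta P d D (φ n) (g n))
      ≤ entOf (WZpt P d D (φ n) (g n)) (fun xy => xy) := hJ
    have hlogM : Real.logb 2 (M n) ≤ n * R := by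
      rw [Real.logb_le_iff_le_rpow (by norm_num) hM']
      exact hrate n
    have hlogΔ : Real.logb 2 δ ≤ Real.logb 2 (WZdelta P d D (φ n) (g n)) :=
      Real.logb_le_logb_of_le (by norm_num) hδ hΔ
    have hd1 : (n:ℝ) * (Real.logb 2 δ / n) = Real.logb 2 δ := by field_simp
    have hcX : condEntOf P Prod.fst Prod.snd = entOf P (fun a => a) - entOf P Prod.snd := by
      unfold condEntOf
      rw [hHX]
    have hcY : condEntOf P Prod.snd Prod.fst = entOf P (fun a => a) - entOf P Prod.fst := by
      unfold condEntOf
      rw [hHY]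
    refine ⟨?_, ?_, c3⟩
    · refine le_of_mul_le_mul_left ?_ hn'
      rw [hcX]
      simp only [mul_sub, mul_add, hd1]
      linarith
    · refine le_of_mul_le_mul_left ?_ hn'
      rw [hcY]
      simp only [mul_sub, mul_add, hd1]
      linarith
  refine ⟨fun n => min 0 (R - condEntOf P Prod.fst Prod.snd
        + condEntOf (WZfull P d D (φ n) (g n)) WZXt (fun ω => (WZYt ω, WZU (φ n) ω))),
    fun n => min 0 (min (condEntOf (WZfull P d D (φ n) (g n)) WZYt (fun ω => (WZXt ω, WZU (φ n) ω))
        - condEntOf P Prod.snd Prod.fst)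
      (condEntOf (WZfull P d D (φ n) (g n)) WZYt (fun ω => (WZXt ω, WZU (φ n) ω))
        - condMIOf (WZfull P d D (φ n) (g n)) WZXt (WZZt (φ n) (g n))
              (fun ω => (WZYt ω, WZU (φ n) ω))
        - condEntOf P Prod.snd Prod.fst)), ?_, ?_, ?_⟩
  · exact tendsto_min_zero (hv (C + CY)) (core.mono fun n h => h.1)
  · refine tendsto_min_zero (hv (C + CX)) (core.mono fun n h => ?_)
    obtain ⟨_, h2, h3⟩ := h
    refine le_min ?_ h2
    linarith
  · intro n
    refine ⟨?_, ?_, ?_, WZ_distortion hP d hD (φ n) (g n)⟩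
    · have := min_le_right (0:ℝ) (R - condEntOf P Prod.fst Prod.snd
        + condEntOf (WZfull P d D (φ n) (g n)) WZXt (fun ω => (WZYt ω, WZU (φ n) ω)))
      dsimp only
      linarith
    · have := (min_le_right (0:ℝ) _).trans (min_le_left
        (condEntOf (WZfull P d D (φ n) (g n)) WZYt (fun ω => (WZXt ω, WZU (φ n) ω))
        - condEntOf P Prod.snd Prod.fst)
      (condEntOf (WZfull P d D (φ n) (g n)) WZYt (fun ω => (WZXt ω, WZU (φ n) ω))
        - condMIOf (WZfull P d D (φ n) (g n)) WZXt (WZZt (φ n) (g n))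
              (fun ω => (WZYt ω, WZU (φ n) ω))
        - condEntOf P Prod.snd Prod.fst))
      dsimp only
      linarith
    · have := (min_le_right (0:ℝ) _).trans (min_le_right
        (condEntOf (WZfull P d D (φ n) (g n)) WZYt (fun ω => (WZXt ω, WZU (φ n) ω))
        - condEntOf P Prod.snd Prod.fst)
      (condEntOf (WZfull P d D (φ n) (g n)) WZYt (fun ω => (WZXt ω, WZU (φ n) ω))
        - condMIOf (WZfull P d D (φ n) (g n)) WZXt (WZZt (φ n) (g n))
              (fun ω => (WZYt ω, WZU (φ n) ω))
        - condEntOf P Prod.snd Prod.fst))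
      dsimp only
      linarith

end WynerZivLemma
end
end

section
/- For every ε ∈ [0,1) and every ε-achievable rate R in the Wyner–Ziv problem, there exists a pmf P* = P*_{UXYZ} on 𝒰×𝒳×𝒴×𝒵 with |𝒰| ≤ |𝒳|·|𝒴|·|𝒵| + 1 and P*_{XY} = P_{XY} such that R ≥ I_{P*}(X;U|Y), I_{P*}(Y;U|X) = 0, I_{P*}(X;Z|Y,U) = 0, and E_{P*}[d(X,Z)] ≤ D; in particular R ≥ R_min. -/
open Filter

noncomputable section

open Classical in
/-- Rate `R` is `ε`-achievable for lossy source coding with side information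
(Wyner–Ziv) under the excess-distortion criterion: there exist sequences (in the
blocklength `n`) of encoders into at most `2^{nR}` messages and of decoders such that
`limsup_n Pr[(1/n)∑ᵢ d(Xᵢ,Zᵢ) > D] ≤ ε`. -/
def wzAchievable {X Y Z : Type*} [Fintype X] [Fintype Y] [Fintype Z]
    (P : X × Y → ℝ) (d : X → Z → ℝ) (D R ε : ℝ) : Prop :=
  0 < R ∧
  ∃ (M : ℕ → ℕ) (φ : ∀ n : ℕ, (Fin n → X) → Fin (M n))
    (g : ∀ n : ℕ, Fin (M n) → (Fin n → Y) → (Fin n → Z)),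
    (∀ n, (M n : ℝ) ≤ 2 ^ ((n : ℝ) * R)) ∧
    limsup (fun n => ∑ xy : (Fin n → X) × (Fin n → Y),
        if D < (∑ i, d (xy.1 i) (g n (φ n xy.1) xy.2 i)) / n
        then iidPair P n xy else 0) atTop ≤ ε

/-- The set of values `I(X;S|Y)` over joint pmfs `P_{SXYZ} = P_{S|X}·P_{XY}·P_{Z|SY}`
(with `S` on a finite auxiliary alphabet) satisfying `E[d(X,Z)] ≤ D`. -/
def RminSet {X Y Z : Type*} [Fintype X] [Fintype Y] [Fintype Z]
    (P : X × Y → ℝ) (d : X → Z → ℝ) (D : ℝ) : Set ℝ :=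
  {r | ∃ (m : ℕ) (PS : X → Fin m → ℝ) (PZ : Fin m × Y → Z → ℝ),
      (∀ x, IsPMF (PS x)) ∧ (∀ sy, IsPMF (PZ sy)) ∧
      (∑ q : Fin m × X × Y × Z,
          (PS q.2.1 q.1 * P (q.2.1, q.2.2.1) * PZ (q.1, q.2.2.1) q.2.2.2)
            * d q.2.1 q.2.2.2) ≤ D ∧
      r = condMIOf
            (fun q : Fin m × X × Y × Z =>
              PS q.2.1 q.1 * P (q.2.1, q.2.2.1) * PZ (q.1, q.2.2.1) q.2.2.2)
            (fun q => q.2.1) (fun q => q.1) (fun q => q.2.2.1)}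

/-- `R_min := min I(X;S|Y)` over admissible auxiliary pmfs. -/
def Rmin {X Y Z : Type*} [Fintype X] [Fintype Y] [Fintype Z]
    (P : X × Y → ℝ) (d : X → Z → ℝ) (D : ℝ) : ℝ :=
  sInf (RminSet P d D)

namespace WZ

open Classical in
lemma pe_def {Ω α : Type*} [Fintype Ω] (p : Ω → ℝ) (A : Ω → α) (a : α) :
    probEq p A a = ∑ ω, if A ω = a then p ω else 0 := by
  unfold probEq; congr

lemma pe_nonneg {Ω α : Type*} [Fintype Ω] {p : Ω → ℝ} (hp : ∀ ω, 0 ≤ p ω) (A : Ω → α) (a : α) :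
    0 ≤ probEq p A a := by
  classical
  rw [pe_def]
  refine Finset.sum_nonneg fun ω _ => ?_
  split_ifs
  · exact hp ω
  · exact le_rfl

lemma le_pe {Ω α : Type*} [Fintype Ω] {p : Ω → ℝ} (hp : ∀ ω, 0 ≤ p ω) (A : Ω → α) (ω : Ω) :
    p ω ≤ probEq p A (A ω) := by
  classical
  rw [pe_def]
  have := Finset.single_le_sum (f := fun ω' => if A ω' = A ω then p ω' else 0)
    (fun i _ => by split_ifs; exacts [hp i, le_rfl]) (Finset.mem_univ ω)
  simpa using this

lemma pe_pos {Ω α : Type*} [Fintype Ω] {p : Ω → ℝ} (hp : ∀ ω, 0 ≤ p ω) (A : Ω → α) {ω : Ω}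
    (h : 0 < p ω) : 0 < probEq p A (A ω) := h.trans_le (le_pe hp A ω)

lemma pe_congr {Ω α β : Type*} [Fintype Ω] (p : Ω → ℝ) (A : Ω → α) (B : Ω → β) (a : α) (b : β)
    (h : ∀ ω, A ω = a ↔ B ω = b) : probEq p A a = probEq p B b := by
  classical
  rw [pe_def, pe_def]
  exact Finset.sum_congr rfl fun ω _ => by simp only [h ω]

lemma pe_id {Ω : Type*} [Fintype Ω] (p : Ω → ℝ) (t : Ω) : probEq p (fun ω => ω) t = p t := by
  classical
  rw [pe_def]
  exact (Finset.sum_eq_single t (fun b _ hb => if_neg hb) (by simp)).trans (if_pos rfl)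

lemma ent_congr {Ω α β : Type*} [Fintype Ω] (p : Ω → ℝ) (A : Ω → α) (B : Ω → β)
    (h : ∀ ω ω', A ω = A ω' ↔ B ω = B ω') : entOf p A = entOf p B := by
  unfold entOf
  congr 1
  exact Finset.sum_congr rfl fun ω _ => by rw [pe_congr p A B _ _ (fun ω' => h ω' ω)]

lemma sum_pe_mul {Ω α : Type*} [Fintype Ω] [Fintype α] (p : Ω → ℝ) (A : Ω → α) (f : α → ℝ) :
    ∑ a, probEq p A a * f a = ∑ ω, p ω * f (A ω) := by
  classical
  simp only [pe_def, Finset.sum_mul]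
  rw [Finset.sum_comm]
  refine Finset.sum_congr rfl fun ω _ => ?_
  simp [ite_mul]

lemma sum_pe {Ω α : Type*} [Fintype Ω] [Fintype α] (p : Ω → ℝ) (A : Ω → α) :
    ∑ a, probEq p A a = ∑ ω, p ω := by
  simpa using sum_pe_mul p A (fun _ => 1)

lemma sum_pe_fst {Ω α β : Type*} [Fintype Ω] [Fintype α] (p : Ω → ℝ) (A : Ω → α) (B : Ω → β)
    (b : β) : ∑ a, probEq p (fun ω => (A ω, B ω)) (a, b) = probEq p B b := by
  classical
  simp only [pe_def]
  rw [Finset.sum_comm]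
  refine Finset.sum_congr rfl fun ω _ => ?_
  by_cases h : B ω = b <;> simp [h]

lemma ent_eq {Ω α : Type*} [Fintype Ω] [Fintype α] (p : Ω → ℝ) (A : Ω → α) :
    entOf p A = -∑ a, probEq p A a * Real.logb 2 (probEq p A a) := by
  unfold entOf
  rw [sum_pe_mul p A (fun a => Real.logb 2 (probEq p A a))]

lemma pe_push {Ω Ω' α : Type*} [Fintype Ω] [Fintype Ω'] (p : Ω → ℝ) (V : Ω → Ω') (A : Ω' → α)
    (a : α) : probEq (probEq p V) A a = probEq p (fun ω => A (V ω)) a := by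
  classical
  have := sum_pe_mul p V (fun v => if A v = a then (1:ℝ) else 0)
  rw [pe_def (probEq p V) A, pe_def p (fun ω => A (V ω))]
  simpa using this

lemma ent_push {Ω Ω' α : Type*} [Fintype Ω] [Fintype Ω'] (p : Ω → ℝ) (V : Ω → Ω') (A : Ω' → α) :
    entOf (probEq p V) A = entOf p (fun ω => A (V ω)) := by
  unfold entOf
  rw [sum_pe_mul p V (fun v => Real.logb 2 (probEq (probEq p V) A (A v)))]
  simp only [pe_push]

lemma gibbs0 {Ω : Type*} [Fintype Ω] {p : Ω → ℝ} (hp : ∀ ω, 0 ≤ p ω) (r : Ω → ℝ)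
    (hr : ∀ ω, 0 < p ω → 0 < r ω) (hs : ∑ ω, p ω * r ω ≤ ∑ ω, p ω) :
    ∑ ω, p ω * Real.logb 2 (r ω) ≤ 0 ∧
      (∑ ω, p ω * Real.logb 2 (r ω) = 0 → ∀ ω, 0 < p ω → r ω = 1) := by
  have hl2 : 0 < Real.log 2 := Real.log_pos (by norm_num)
  have key : ∀ ω, p ω * Real.log (r ω) ≤ p ω * r ω - p ω := by
    intro ω
    rcases (hp ω).eq_or_lt with h | h
    · simp [← h]
    · have := Real.log_le_sub_one_of_pos (hr ω h)
      nlinarith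
  have e : ∑ ω, p ω * Real.logb 2 (r ω) = (∑ ω, p ω * Real.log (r ω)) / Real.log 2 := by
    rw [Finset.sum_div]
    exact Finset.sum_congr rfl fun ω _ => by unfold Real.logb; ring
  have s : ∑ ω, p ω * Real.log (r ω) ≤ ∑ ω, (p ω * r ω - p ω) :=
    Finset.sum_le_sum fun ω _ => key ω
  have s2 : ∑ ω, (p ω * r ω - p ω) ≤ 0 := by rw [Finset.sum_sub_distrib]; linarith
  refine ⟨?_, ?_⟩
  · rw [e]; exact div_nonpos_of_nonpos_of_nonneg (s.trans s2) hl2.le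
  · intro h0 ω hω
    rw [e, div_eq_zero_iff] at h0
    have h0' : ∑ ω, p ω * Real.log (r ω) = 0 := h0.resolve_right hl2.ne'
    have heq : ∑ ω, p ω * Real.log (r ω) = ∑ ω, (p ω * r ω - p ω) := by
      apply le_antisymm s; linarith
    have h1 := (Finset.sum_eq_sum_iff_of_le (fun ω _ => key ω)).1 heq ω (Finset.mem_univ ω)
    by_contra hne
    have := Real.log_lt_sub_one_of_pos (hr ω hω) hne
    nlinarith

lemma sum_ratio {Ω α : Type*} [Fintype Ω] [Fintype α] {p : Ω → ℝ} (hp : ∀ ω, 0 ≤ p ω)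
    (A : Ω → α) (q : α → ℝ) (hq : ∀ a, 0 ≤ q a) :
    ∑ ω, p ω * (q (A ω) / probEq p A (A ω)) ≤ ∑ a, q a := by
  rw [← sum_pe_mul p A (fun a => q a / probEq p A a)]
  refine Finset.sum_le_sum fun a _ => ?_
  rcases (pe_nonneg hp A a).eq_or_lt with h | h
  · rw [← h]; simpa using hq a
  · rw [mul_div_cancel₀ _ h.ne']

/-- Gibbs inequality with equality case. -/
lemma gibbs {Ω α : Type*} [Fintype Ω] [Fintype α] {p : Ω → ℝ} (hp : ∀ ω, 0 ≤ p ω)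
    (A : Ω → α) (q : α → ℝ) (hq : ∀ a, 0 ≤ q a) (hqs : ∑ a, q a ≤ ∑ ω, p ω)
    (hpos : ∀ ω, 0 < p ω → 0 < q (A ω)) :
    entOf p A ≤ -∑ ω, p ω * Real.logb 2 (q (A ω)) ∧
    (entOf p A = -∑ ω, p ω * Real.logb 2 (q (A ω)) →
      ∀ ω, 0 < p ω → probEq p A (A ω) = q (A ω)) := by
  have := gibbs0 hp (fun ω => q (A ω) / probEq p A (A ω))
    (fun ω h => div_pos (hpos ω h) (pe_pos hp A h)) ((sum_ratio hp A q hq).trans hqs)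
  have e : ∑ ω, p ω * Real.logb 2 (q (A ω) / probEq p A (A ω)) =
      ∑ ω, p ω * Real.logb 2 (q (A ω)) + entOf p A := by
    unfold entOf
    rw [← sub_eq_add_neg, ← Finset.sum_sub_distrib]
    refine Finset.sum_congr rfl fun ω _ => ?_
    rcases (hp ω).eq_or_lt with h | h
    · simp [← h]
    · rw [Real.logb_div (hpos ω h).ne' (pe_pos hp A h).ne']; ring
  rw [e] at this
  refine ⟨by linarith [this.1], fun h ω hω => ?_⟩
  have h2 := this.2 (by linarith) ω hω
  rw [div_eq_one_iff_eq (pe_pos hp A hω).ne'] at h2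
  exact h2.symm

/-- submodularity with equality case -/
lemma submod {Ω α β γ : Type*} [Fintype Ω] [Fintype α] [Fintype β] [Fintype γ] {p : Ω → ℝ}
    (hp : ∀ ω, 0 ≤ p ω) (A : Ω → α) (B : Ω → β) (C : Ω → γ) :
    0 ≤ condMIOf p A B C ∧ (condMIOf p A B C = 0 → ∀ ω, 0 < p ω →
      probEq p (fun ω => ((A ω, B ω), C ω)) ((A ω, B ω), C ω) * probEq p C (C ω) =
      probEq p (fun ω => (A ω, C ω)) (A ω, C ω) * probEq p (fun ω => (B ω, C ω)) (B ω, C ω)) := by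
  set AC := fun ω => (A ω, C ω) with hAC
  set BC := fun ω => (B ω, C ω) with hBC
  set ABC := fun ω => ((A ω, B ω), C ω) with hABC
  set q : (α × β) × γ → ℝ := fun t => probEq p AC (t.1.1, t.2) * probEq p BC (t.1.2, t.2) /
    probEq p C t.2 with hqdef
  have hq : ∀ t, 0 ≤ q t := fun t => div_nonneg (mul_nonneg (pe_nonneg hp _ _) (pe_nonneg hp _ _))
    (pe_nonneg hp _ _)
  have hqs : ∑ t, q t ≤ ∑ ω, p ω := by
    rw [Fintype.sum_prod_type_right]
    rw [← sum_pe p C]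
    refine Finset.sum_le_sum fun c _ => ?_
    rw [Fintype.sum_prod_type]
    simp only [hqdef]
    have : ∀ a, ∑ b, probEq p AC (a, c) * probEq p BC (b, c) / probEq p C c =
        probEq p AC (a, c) * (probEq p C c / probEq p C c) := by
      intro a
      rw [← Finset.sum_div, ← Finset.mul_sum, sum_pe_fst p B C c, mul_div_assoc]
    simp only [this]
    rw [← Finset.sum_mul, sum_pe_fst p A C c]
    rcases (pe_nonneg hp C c).eq_or_lt with h | h
    · simp [← h]
    · rw [div_self h.ne', mul_one]
  have hpos : ∀ ω, 0 < p ω → 0 < q (ABC ω) := fun ω h =>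
    div_pos (mul_pos (pe_pos hp AC h) (pe_pos hp BC h)) (pe_pos hp C h)
  have g := gibbs hp ABC q hq hqs hpos
  have e : ∑ ω, p ω * Real.logb 2 (q (ABC ω)) = - entOf p AC - entOf p BC + entOf p C := by
    unfold entOf
    rw [neg_neg, sub_neg_eq_add, ← Finset.sum_add_distrib, ← sub_eq_add_neg,
      ← Finset.sum_sub_distrib]
    refine Finset.sum_congr rfl fun ω _ => ?_
    rcases (hp ω).eq_or_lt with h | h
    · simp [← h]
    · have h1 := pe_pos hp AC h
      have h2 := pe_pos hp BC h
      have h3 := pe_pos hp C h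
      have : q (ABC ω) = probEq p AC (AC ω) * probEq p BC (BC ω) / probEq p C (C ω) := rfl
      rw [this, Real.logb_div (mul_pos h1 h2).ne' h3.ne', Real.logb_mul h1.ne' h2.ne']; ring
  rw [e] at g
  have ec : condMIOf p A B C = entOf p AC + entOf p BC - entOf p ABC - entOf p C := by
    unfold condMIOf condEntOf; ring
  refine ⟨by rw [ec]; linarith [g.1], fun h ω hω => ?_⟩
  rw [ec] at h
  have := g.2 (by linarith) ω hω
  have h3 := pe_pos hp C hω
  have h4 : probEq p ABC (ABC ω) = probEq p AC (AC ω) * probEq p BC (BC ω) / probEq p C (C ω) :=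
    this
  rw [eq_div_iff h3.ne'] at h4
  exact h4

lemma submod' {Ω α β γ : Type*} [Fintype Ω] [Fintype α] [Fintype β] [Fintype γ] {p : Ω → ℝ}
    (hp : ∀ ω, 0 ≤ p ω) (A : Ω → α) (B : Ω → β) (C : Ω → γ) :
    entOf p (fun ω => ((A ω, B ω), C ω)) + entOf p C ≤
      entOf p (fun ω => (A ω, C ω)) + entOf p (fun ω => (B ω, C ω)) := by
  have := (submod hp A B C).1
  unfold condMIOf condEntOf at this
  linarith

lemma ent_smul {Ω α : Type*} [Fintype Ω] (p : Ω → ℝ) (A : Ω → α) (c : ℝ) (hc : 0 ≤ c)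
    (hp : ∀ ω, 0 ≤ p ω) :
    entOf (fun ω => c * p ω) A = c * entOf p A - c * Real.logb 2 c * ∑ ω, p ω := by
  classical
  have e : ∀ a, probEq (fun ω => c * p ω) A a = c * probEq p A a := by
    intro a
    rw [pe_def, pe_def, Finset.mul_sum]
    simp
  unfold entOf
  simp only [e]
  rcases hc.eq_or_lt with h | h
  · simp [← h]
  rw [mul_neg, Finset.mul_sum, Finset.mul_sum, ← neg_add', ← Finset.sum_add_distrib]
  congr 1
  refine Finset.sum_congr rfl fun ω _ => ?_
  rcases (hp ω).eq_or_lt with h' | h'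
  · simp [← h']
  · rw [Real.logb_mul h.ne' (pe_pos hp A h').ne']; ring

lemma ent_slice {U V α : Type*} [Fintype U] [Fintype V] (q : U × V → ℝ) (A : U → V → α) :
    entOf q (fun t => (t.1, A t.1 t.2)) = ∑ u, entOf (fun v => q (u, v)) (A u) := by
  classical
  unfold entOf
  rw [Finset.sum_neg_distrib, Fintype.sum_prod_type]
  congr 1
  refine Finset.sum_congr rfl fun u _ => Finset.sum_congr rfl fun v _ => ?_
  congr 2
  rw [pe_def, pe_def, Fintype.sum_prod_type, Finset.sum_eq_single u]
  · simp
  · intro b _ hb; simp [hb]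
  · simp

lemma ent_cont {Ω α : Type*} [Fintype Ω] [Fintype α] (A : Ω → α) :
    Continuous (fun p : Ω → ℝ => entOf p A) := by
  classical
  have : (fun p : Ω → ℝ => entOf p A) =
      fun p => ∑ a, Real.negMulLog (probEq p A a) / Real.log 2 := by
    funext p
    rw [ent_eq, ← Finset.sum_neg_distrib]
    refine Finset.sum_congr rfl fun a _ => ?_
    unfold Real.negMulLog Real.logb; ring
  rw [this]
  refine continuous_finsetSum _ fun a _ => (Real.continuous_negMulLog.comp ?_).div_const _
  simp only [pe_def]
  refine continuous_finsetSum _ fun ω _ => ?_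
  split_ifs
  · exact continuous_apply ω
  · exact continuous_const

end WZ
namespace WZ

lemma conic_car_aux {ι V : Type*} [Fintype ι] [AddCommGroup V] [Module ℝ V] [FiniteDimensional ℝ V]
    (v : ι → V) (k : ℕ) : ∀ c : ι → ℝ, (∀ i, 0 ≤ c i) →
      (Finset.univ.filter (fun i => c i ≠ 0)).card = k →
      ∃ c' : ι → ℝ, (∀ i, 0 ≤ c' i) ∧ ∑ i, c' i • v i = ∑ i, c i • v i ∧
        (Finset.univ.filter (fun i => c' i ≠ 0)).card ≤ Module.finrank ℝ V := by
  classical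
  induction k using Nat.strong_induction_on with
  | _ k ih =>
  intro c hc hk
  by_cases hle : k ≤ Module.finrank ℝ V
  · exact ⟨c, hc, rfl, by convert hk.trans_le hle⟩
  set S := Finset.univ.filter (fun i => c i ≠ 0) with hS
  have hSk : S.card = k := by convert hk
  have hnl : ¬ LinearIndependent ℝ (fun i : S => v i) := by
    intro h
    have := h.fintype_card_le_finrank
    rw [Fintype.card_coe] at this
    omega
  obtain ⟨g, hg0, i1, hi1⟩ := Fintype.not_linearIndependent_iff.1 hnl
  have hG : ∃ G : ι → ℝ, (∀ i, c i = 0 → G i = 0) ∧ ∑ i, G i • v i = 0 ∧ ∃ i, 0 < G i := by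
    set G : ι → ℝ := fun i => if h : i ∈ S then g ⟨i, h⟩ else 0 with hGdef
    have a1 : ∀ i, c i = 0 → G i = 0 := by
      intro i hi
      have : i ∉ S := by simp [hS, hi]
      simp [hGdef, this]
    have a2 : ∑ i, G i • v i = 0 := by
      rw [← hg0]
      symm
      apply Fintype.sum_of_injective (fun i : S => (i : ι)) Subtype.val_injective
      · intro i hi
        have : i ∉ S := by simpa using hi
        simp [hGdef, this]
      · intro i; simp [hGdef]
    have a3 : G i1 ≠ 0 := by simpa [hGdef] using hi1
    rcases lt_or_gt_of_ne a3 with h | h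
    · exact ⟨fun i => - G i, fun i hi => by simp [a1 i hi], by simp [a2], i1, by simpa using h⟩
    · exact ⟨G, a1, a2, i1, h⟩
  obtain ⟨G, hG0, hGs, i2, hi2⟩ := hG
  obtain ⟨i0, hi0m, hi0⟩ := Finset.exists_min_image (Finset.univ.filter (fun i => 0 < G i))
    (fun i => c i / G i) ⟨i2, by simp [hi2]⟩
  have hi0' : 0 < G i0 := by simpa using hi0m
  set t := c i0 / G i0 with ht
  have ht0 : 0 ≤ t := div_nonneg (hc i0) hi0'.le
  have hc2 : ∀ i, 0 ≤ c i - t * G i := by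
    intro i
    rcases le_or_gt (G i) 0 with h | h
    · have := hc i; nlinarith
    · have := hi0 i (by simp [h])
      rw [le_div_iff₀ h] at this
      linarith
  have hz : c i0 - t * G i0 = 0 := by rw [ht]; field_simp; ring
  have hi0S : i0 ∈ S := by
    simp only [hS, Finset.mem_filter, Finset.mem_univ, true_and]
    intro h; have := hG0 i0 h; linarith
  have hlt : (Finset.univ.filter (fun i => c i - t * G i ≠ 0)).card < k := by
    rw [← hSk]
    apply Finset.card_lt_card
    rw [Finset.ssubset_iff_of_subset]
    · exact ⟨i0, hi0S, by simp [hz]⟩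
    · intro i hi
      simp only [hS, Finset.mem_filter, Finset.mem_univ, true_and] at hi ⊢
      intro h; apply hi; simp [h, hG0 i h]
  obtain ⟨c', h1, h2, h3⟩ := ih _ hlt (fun i => c i - t * G i) hc2 (by congr)
  refine ⟨c', h1, ?_, h3⟩
  rw [h2]
  simp only [sub_smul, mul_smul, Finset.sum_sub_distrib, ← Finset.smul_sum, hGs, smul_zero, sub_zero]

lemma conic_car {ι V : Type*} [Fintype ι] [Nonempty ι] [AddCommGroup V] [Module ℝ V]
    [FiniteDimensional ℝ V] (v : ι → V) (K : ℕ) (hK : Module.finrank ℝ V ≤ K) :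
    ∃ (f : Fin K → ι) (c : Fin K → ℝ), (∀ k, 0 ≤ c k) ∧ ∑ k, c k • v (f k) = ∑ i, v i := by
  classical
  obtain ⟨c, hc, hs, hcard⟩ := conic_car_aux v _ (fun _ => 1) (fun _ => zero_le_one) rfl
  simp only [one_smul] at hs
  set S := Finset.univ.filter (fun i => c i ≠ 0) with hS
  have hSK : S.card ≤ K := by refine le_trans (le_of_eq ?_) (hcard.trans hK); congr
  set e : S → Fin K := fun i => Fin.castLE hSK (S.equivFin i) with he
  have hinj : Function.Injective e := fun a b h => by
    simpa [he] using h
  have hS0 : ∀ i, i ∉ S → c i = 0 := by intro i hi; simpa [hS] using hi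
  refine ⟨Function.extend e (fun i => (i : ι)) (fun _ => Classical.arbitrary ι),
    Function.extend e (fun i => c i) (fun _ => 0), ?_, ?_⟩
  · intro k
    by_cases h : ∃ i, e i = k
    · obtain ⟨i, rfl⟩ := h
      rw [hinj.extend_apply]; exact hc _
    · rw [Function.extend_apply' _ _ _ h]
  · rw [← hs]
    trans ∑ i : S, c i • v i
    · symm
      apply Fintype.sum_of_injective e hinj
      · intro k hk
        rw [Function.extend_apply' _ (fun _ => (0:ℝ)) _ (by simpa using hk), zero_smul]
      · intro i; rw [hinj.extend_apply, hinj.extend_apply]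
    · apply Fintype.sum_of_injective (fun i : S => (i : ι)) Subtype.val_injective
      · intro i hi
        rw [hS0 i (by simpa using hi), zero_smul]
      · intro i; rfl

lemma reduce {U V : Type*} [Fintype U] [Nonempty U] [Fintype V] (q : U × V → ℝ) (hq : ∀ t, 0 ≤ q t)
    (g : (V → ℝ) → ℝ) (hg : ∀ (c : ℝ) (s : V → ℝ), 0 ≤ c → (∀ v, 0 ≤ s v) →
      g (fun v => c * s v) = c * g s) :
    ∃ q' : Fin (Fintype.card V + 1) × V → ℝ, (∀ t, 0 ≤ q' t) ∧
      (∀ v, ∑ k, q' (k, v) = ∑ u, q (u, v)) ∧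
      ∑ k, g (fun v => q' (k, v)) = ∑ u, g (fun v => q (u, v)) := by
  obtain ⟨f, c, hc, hs⟩ := conic_car
    (fun u : U => ((fun v => q (u, v), g (fun v => q (u, v))) : (V → ℝ) × ℝ))
    (Fintype.card V + 1) (by simp)
  refine ⟨fun t => c t.1 * q (f t.1, t.2), fun t => mul_nonneg (hc _) (hq _), ?_, ?_⟩
  · intro v
    have := congrArg (fun w => w.1 v) hs
    simpa [Prod.fst_sum] using this
  · have := congrArg (fun w => w.2) hs
    simp only [Prod.snd_sum, Prod.smul_snd, smul_eq_mul] at this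
    rw [← this]
    exact Finset.sum_congr rfl fun k _ => hg _ _ (hc k) (fun v => hq _)

end WZ
namespace WZ

section
variable {U X Y Z : Type*} [Fintype U] [Fintype X] [Fintype Y] [Fintype Z]

def I0 (q : U × X × Y × Z → ℝ) : ℝ :=
  condMIOf q (fun q => q.2.1) (fun q => q.1) (fun q => q.2.2.1)
def I1 (q : U × X × Y × Z → ℝ) : ℝ :=
  condMIOf q (fun q => q.2.2.1) (fun q => q.1) (fun q => q.2.1)
def I2 (q : U × X × Y × Z → ℝ) : ℝ :=
  condMIOf q (fun q => q.2.1) (fun q => q.2.2.2) (fun q => (q.2.2.1, q.1))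

lemma I0_eq (q : U × X × Y × Z → ℝ) : I0 q =
    entOf q (fun t => (t.2.1, t.2.2.1)) - entOf q (fun t => t.2.2.1)
    + entOf q (fun t => (t.1, t.2.2.1)) - entOf q (fun t => (t.1, (t.2.1, t.2.2.1))) := by
  unfold I0 condMIOf condEntOf
  rw [ent_congr q (fun ω => ((ω.2.1, ω.1), ω.2.2.1)) (fun t => (t.1, (t.2.1, t.2.2.1)))
    (by intro a b; simp only [Prod.mk.injEq]; tauto)]
  ring

lemma I12_eq (q : U × X × Y × Z → ℝ) : I1 q + I2 q =
    entOf q (fun t => (t.2.1, t.2.2.1)) - entOf q (fun t => t.2.1)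
    + entOf q (fun t => (t.1, t.2.1)) + entOf q (fun t => (t.1, (t.2.2.2, t.2.2.1)))
    - entOf q (fun t => (t.1, t.2.2.1)) - entOf q (fun t => (t.1, t.2)) := by
  unfold I1 I2 condMIOf condEntOf
  rw [ent_congr q (fun ω => (ω.2.2.1, ω.2.1)) (fun t => (t.2.1, t.2.2.1))
    (by intro a b; simp only [Prod.mk.injEq]; tauto),
   ent_congr q (fun ω => ((ω.2.2.1, ω.1), ω.2.1)) (fun t => (t.2.1, (t.2.2.1, t.1)))
    (by intro a b; simp only [Prod.mk.injEq]; tauto),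
   ent_congr q (fun ω => ((ω.2.2.1, ω.1))) (fun t => (t.1, t.2.2.1))
    (by intro a b; simp only [Prod.mk.injEq]; tauto),
   ent_congr q (fun ω => (ω.2.2.2, ω.2.2.1, ω.1)) (fun t => (t.1, (t.2.2.2, t.2.2.1)))
    (by intro a b; simp only [Prod.mk.injEq]; tauto),
   ent_congr q (fun ω => ((ω.2.1, ω.2.2.2), ω.2.2.1, ω.1)) (fun t => (t.1, t.2))
    (by intro a b; simp only [Prod.mk.injEq, Prod.ext_iff]; tauto)]
  ring

/-- approximate single-letter conditions -/
def Good (P : X × Y → ℝ) (d : X → Z → ℝ) (D R δ : ℝ) (q : U × X × Y × Z → ℝ) : Prop :=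
  IsPMF q ∧ (∀ t, P (t.2.1, t.2.2.1) = 0 → q t = 0) ∧ I0 q ≤ R + δ ∧ I1 q + I2 q ≤ δ ∧
  -(∑ t, q t * Real.logb 2 (P (t.2.1, t.2.2.1))) - entOf q (fun t => (t.2.1, t.2.2.1)) ≤ δ ∧
  ∑ t, q t * d t.2.1 t.2.2.2 ≤ D

lemma pe_snd {V : Type*} [Fintype V] (q : U × V → ℝ) :
    probEq q (fun t => t.2) = fun v => ∑ u, q (u, v) := by
  classical
  funext v
  rw [pe_def, Fintype.sum_prod_type]
  exact Finset.sum_congr rfl fun u _ => by simp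

lemma good_reduce (P : X × Y → ℝ) (d : X → Z → ℝ) (D R δ η l : ℝ) (q : U × X × Y × Z → ℝ)
    (h : Good P d D R η q) (hl : 0 < l) (h1 : (1 + l) * η ≤ δ) (h2 : R + δ ≤ l * δ) (h3 : η ≤ δ) :
    ∃ q' : Fin (Fintype.card (X × Y × Z) + 1) × X × Y × Z → ℝ, Good P d D R δ q' := by
  obtain ⟨⟨hq0, hq1⟩, hsup, hI0, hI12, hC, hdist⟩ := h
  have : Nonempty U := by
    by_contra hne
    rw [not_nonempty_iff] at hne
    simp at hq1
  set g : (X × Y × Z → ℝ) → ℝ := fun s =>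
    l * (entOf s (fun v => v.1) + entOf s (fun v => (v.2.2, v.2.1)) - entOf s (fun v => v.2.1)
      - entOf s (fun v => v)) + (entOf s (fun v => v.2.1) - entOf s (fun v => (v.1, v.2.1))) with hg
  obtain ⟨q', hq'0, hmarg, hsum⟩ := reduce q hq0 g (by
    intro c s hc hs
    simp only [hg, ent_smul s _ c hc hs]
    ring)
  have hm : probEq q' (fun t => t.2) = probEq q (fun t => t.2) := by
    rw [pe_snd, pe_snd]; funext v; exact hmarg v
  have hE2 : entOf q' (fun t => (t.2.1, t.2.2.1)) = entOf q (fun t => (t.2.1, t.2.2.1)) := by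
    rw [← ent_push q' (fun t => t.2) (fun v => (v.1, v.2.1)),
      ← ent_push q (fun t => t.2) (fun v => (v.1, v.2.1)), hm]
  have hEx : entOf q' (fun t => t.2.1) = entOf q (fun t => t.2.1) := by
    rw [← ent_push q' (fun t => t.2) (fun v => v.1),
      ← ent_push q (fun t => t.2) (fun v => v.1), hm]
  have hEy : entOf q' (fun t => t.2.2.1) = entOf q (fun t => t.2.2.1) := by
    rw [← ent_push q' (fun t => t.2) (fun v => v.2.1),
      ← ent_push q (fun t => t.2) (fun v => v.2.1), hm]
  have hS : ∀ f : X × Y × Z → ℝ, ∑ t, q' t * f t.2 = ∑ t, q t * f t.2 := by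
    intro f
    rw [← sum_pe_mul q' (fun t => t.2) f, ← sum_pe_mul q (fun t => t.2) f, hm]
  -- slices
  have hslice : ∀ {W : Type _} [Fintype W] (q : W × X × Y × Z → ℝ),
      ∑ u, g (fun v => q (u, v)) = l * (entOf q (fun t => (t.1, t.2.1))
        + entOf q (fun t => (t.1, (t.2.2.2, t.2.2.1)))
        - entOf q (fun t => (t.1, t.2.2.1)) - entOf q (fun t => (t.1, t.2))) +
        (entOf q (fun t => (t.1, t.2.2.1)) - entOf q (fun t => (t.1, (t.2.1, t.2.2.1)))) := by
    intro W _ q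
    simp only [hg]
    rw [ent_slice q (fun _ v => v.1), ent_slice q (fun _ v => (v.2.2, v.2.1)),
      ent_slice q (fun _ v => v.2.1), ent_slice q (fun _ v => v),
      ent_slice q (fun _ v => (v.1, v.2.1))]
    simp only [Finset.sum_add_distrib, Finset.sum_sub_distrib, ← Finset.mul_sum]
  have hsliceU : ∑ u, g (fun v => q (u, v)) = l * (entOf q (fun t => (t.1, t.2.1))
        + entOf q (fun t => (t.1, (t.2.2.2, t.2.2.1)))
        - entOf q (fun t => (t.1, t.2.2.1)) - entOf q (fun t => (t.1, t.2))) +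
        (entOf q (fun t => (t.1, t.2.2.1)) - entOf q (fun t => (t.1, (t.2.1, t.2.2.1)))) := by
    simp only [hg]
    rw [ent_slice q (fun _ v => v.1), ent_slice q (fun _ v => (v.2.2, v.2.1)),
      ent_slice q (fun _ v => v.2.1), ent_slice q (fun _ v => v),
      ent_slice q (fun _ v => (v.1, v.2.1))]
    simp only [Finset.sum_add_distrib, Finset.sum_sub_distrib, ← Finset.mul_sum]
  have htot : l * (I1 q' + I2 q') + I0 q' = l * (I1 q + I2 q) + I0 q := by
    have := hslice q'
    rw [hsum, hsliceU] at this
    rw [I12_eq, I12_eq, I0_eq, I0_eq, hE2, hEx, hEy]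
    linear_combination -this
  have n0 : 0 ≤ I0 q' := (submod hq'0 _ _ _).1
  have n1 : 0 ≤ I1 q' := (submod hq'0 _ _ _).1
  have n2 : 0 ≤ I2 q' := (submod hq'0 _ _ _).1
  have hb : l * (I1 q' + I2 q') + I0 q' ≤ R + δ := by
    rw [htot]
    nlinarith
  refine ⟨q', ⟨hq'0, ?_⟩, ?_, ?_, ?_, ?_, ?_⟩
  · have := hS (fun _ => 1)
    simpa [hq1] using this
  · intro t ht
    have h0 : ∑ k, q' (k, t.2) = 0 := by
      rw [hmarg]
      exact Finset.sum_eq_zero fun u _ => hsup (u, t.2) ht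
    have := (Finset.sum_eq_zero_iff_of_nonneg (fun k _ => hq'0 (k, t.2))).1 h0 t.1 (Finset.mem_univ _)
    simpa using this
  · have : 0 ≤ l * (I1 q' + I2 q') := by positivity
    linarith
  · have : l * (I1 q' + I2 q') ≤ l * δ := by linarith
    exact le_of_mul_le_mul_left this hl
  · rw [hE2, hS (fun v => Real.logb 2 (P (v.1, v.2.1)))]
    linarith
  · rw [hS (fun v => d v.1 v.2.2)]; exact hdist

lemma condMI_cont {Ω α β γ : Type*} [Fintype Ω] [Fintype α] [Fintype β] [Fintype γ]
    (A : Ω → α) (B : Ω → β) (C : Ω → γ) : Continuous (fun p : Ω → ℝ => condMIOf p A B C) := by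
  unfold condMIOf condEntOf
  exact (((ent_cont _).sub (ent_cont _)).add ((ent_cont _).sub (ent_cont _))).sub
    ((ent_cont _).sub (ent_cont _))

lemma good_limit (P : X × Y → ℝ) (d : X → Z → ℝ) (D R : ℝ)
    (h : ∀ δ : ℝ, 0 < δ → ∃ q : U × X × Y × Z → ℝ, Good P d D R δ q) :
    ∃ q : U × X × Y × Z → ℝ, Good P d D R 0 q := by
  choose! f hf using h
  have hpos : ∀ n : ℕ, (0:ℝ) < 1 / ((n:ℝ) + 1) := fun n => by positivity
  set s : ℕ → (U × X × Y × Z → ℝ) := fun n => f (1 / ((n:ℝ) + 1)) with hs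
  have hg : ∀ n : ℕ, Good P d D R (1 / ((n:ℝ) + 1)) (s n) := fun n => hf _ (hpos n)
  obtain ⟨q, hq, φ, hφ, hlim⟩ := (isCompact_stdSimplex ℝ (U × X × Y × Z)).tendsto_subseq
    (x := s) (fun n => (hg n).1)
  have hδ : Tendsto (fun n => 1 / (((φ n : ℕ):ℝ) + 1)) atTop (nhds 0) :=
    tendsto_one_div_add_atTop_nhds_zero_nat.comp hφ.tendsto_atTop
  have hev : ∀ F : (U × X × Y × Z → ℝ) → ℝ, Continuous F →
      Tendsto (fun n => F (s (φ n))) atTop (nhds (F q)) := fun F hF =>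
    (hF.tendsto q).comp hlim
  have hlin : ∀ w : U × X × Y × Z → ℝ, Continuous (fun q : U × X × Y × Z → ℝ => ∑ t, q t * w t) :=
    fun w => by fun_prop
  refine ⟨q, hq, ?_, ?_, ?_, ?_, ?_⟩
  · intro t ht
    refine tendsto_nhds_unique (hev (fun q => q t) (continuous_apply t)) ?_
    have : (fun n => s (φ n) t) = fun _ => 0 := funext fun n => (hg (φ n)).2.1 t ht
    rw [this]; exact tendsto_const_nhds
  · exact le_of_tendsto_of_tendsto' (hev I0 (condMI_cont _ _ _)) (hδ.const_add R)
      (fun n => (hg (φ n)).2.2.1)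
  · exact le_of_tendsto_of_tendsto' (hev (fun q => I1 q + I2 q)
      ((condMI_cont _ _ _).add (condMI_cont _ _ _))) hδ (fun n => (hg (φ n)).2.2.2.1)
  · exact le_of_tendsto_of_tendsto' (hev (fun q => -(∑ t, q t * Real.logb 2 (P (t.2.1, t.2.2.1)))
      - entOf q (fun t => (t.2.1, t.2.2.1))) ((hlin _).neg.sub (ent_cont _))) hδ
      (fun n => (hg (φ n)).2.2.2.2.1)
  · exact le_of_tendsto' (hev (fun q => ∑ t, q t * d t.2.1 t.2.2.2) (hlin _))
      (fun n => (hg (φ n)).2.2.2.2.2)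

lemma pmf_eq_of_eq_on_supp {Ω : Type*} [Fintype Ω] (p q : Ω → ℝ) (hp : IsPMF p) (hq : IsPMF q)
    (h : ∀ ω, 0 < p ω → p ω = q ω) : p = q := by
  have hle : ∀ ω, p ω ≤ q ω := by
    intro ω
    rcases (hp.1 ω).eq_or_lt with h' | h'
    · rw [← h']; exact hq.1 ω
    · exact (h ω h').le
  have := (Finset.sum_eq_sum_iff_of_le (fun ω (_ : ω ∈ Finset.univ) => hle ω)).1
    (hp.2.trans hq.2.symm)
  exact funext fun ω => this ω (Finset.mem_univ _)

lemma good_zero (P : X × Y → ℝ) (hP : IsPMF P) (d : X → Z → ℝ) (D R : ℝ)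
    (q : U × X × Y × Z → ℝ) (h : Good P d D R 0 q) :
    (∀ x y, probEq q (fun q => (q.2.1, q.2.2.1)) (x, y) = P (x, y)) ∧ I0 q ≤ R ∧ I1 q = 0 ∧
      I2 q = 0 := by
  obtain ⟨hq, hsup, h0, h12, hC, hd⟩ := h
  have n1 : 0 ≤ I1 q := (submod hq.1 _ _ _).1
  have n2 : 0 ≤ I2 q := (submod hq.1 _ _ _).1
  refine ⟨?_, by linarith, by linarith, by linarith⟩
  have hpos : ∀ t, 0 < q t → 0 < P (t.2.1, t.2.2.1) := fun t ht =>
    lt_of_le_of_ne (hP.1 _) (fun h => by have := hsup t h.symm; linarith)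
  have g := gibbs hq.1 (fun t => (t.2.1, t.2.2.1)) P hP.1 (by rw [hP.2, hq.2]) hpos
  have g2 := g.2 (by apply le_antisymm g.1; linarith)
  have : probEq q (fun q => (q.2.1, q.2.2.1)) = P := by
    refine pmf_eq_of_eq_on_supp _ _ ⟨pe_nonneg hq.1 _, by rw [sum_pe, hq.2]⟩ hP ?_
    intro w hw
    classical
    rw [pe_def] at hw
    obtain ⟨t, -, ht⟩ := Finset.exists_lt_of_sum_lt (s := Finset.univ) (f := fun _ => (0:ℝ))
      (by simpa using hw)
    by_cases hw' : (t.2.1, t.2.2.1) = w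
    · rw [if_pos hw'] at ht
      rw [← hw']
      exact g2 t ht
    · rw [if_neg hw'] at ht; exact absurd ht (lt_irrefl _)
  intro x y; rw [this]

end

section
variable {X Y Z : Type*} [Fintype X] [Fintype Y] [Fintype Z]

open Classical in
lemma prod_pmf {m : ℕ} (P : X × Y → ℝ) (hP : IsPMF P) (PS : X → Fin m → ℝ)
    (PZ : Fin m × Y → Z → ℝ) (hS : ∀ x, IsPMF (PS x)) (hZ : ∀ sy, IsPMF (PZ sy)) :
    IsPMF (fun q : Fin m × X × Y × Z =>
      PS q.2.1 q.1 * P (q.2.1, q.2.2.1) * PZ (q.1, q.2.2.1) q.2.2.2) := by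
  refine ⟨fun q => mul_nonneg (mul_nonneg ((hS _).1 _) (hP.1 _)) ((hZ _).1 _), ?_⟩
  simp only [Fintype.sum_prod_type]
  simp only [← Finset.mul_sum, (hZ _).2, mul_one]
  rw [Finset.sum_comm]
  simp only [← Finset.sum_mul, (hS _).2, one_mul]
  rw [← hP.2, Fintype.sum_prod_type]

lemma rmin_bdd (P : X × Y → ℝ) (hP : IsPMF P) (d : X → Z → ℝ) (D : ℝ) :
    BddBelow (RminSet P d D) := by
  refine ⟨0, ?_⟩
  rintro r ⟨m, PS, PZ, hS, hZ, -, rfl⟩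
  exact (submod (prod_pmf P hP PS PZ hS hZ).1 _ _ _).1

lemma exists_kernel {α β : Type*} [Fintype β] [Nonempty β] (f : α → β → ℝ) (hf : ∀ a b, 0 ≤ f a b) :
    ∃ k : α → β → ℝ, (∀ a, IsPMF (k a)) ∧ ∀ a b, f a b = (∑ b, f a b) * k a b := by
  classical
  refine ⟨fun a b => if ∑ b, f a b = 0 then (if b = Classical.arbitrary β then 1 else 0) else
    f a b / ∑ b, f a b, ?_, ?_⟩
  · intro a
    by_cases h : ∑ b, f a b = 0
    · simp only [h, if_true]
      exact ⟨fun b => by dsimp only; split_ifs <;> norm_num, by simp⟩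
    · simp only [h, if_false]
      exact ⟨fun b => div_nonneg (hf a b) (Finset.sum_nonneg fun b _ => hf a b),
        by rw [← Finset.sum_div, div_self h]⟩
  · intro a b
    by_cases h : ∑ b, f a b = 0
    · rw [h, zero_mul]
      exact (Finset.sum_eq_zero_iff_of_nonneg (fun b _ => hf a b)).1 h b (Finset.mem_univ _)
    · simp only [h, if_false]
      rw [mul_div_cancel₀ _ h]

lemma rmin_le {m : ℕ} (P : X × Y → ℝ) (hP : IsPMF P) (d : X → Z → ℝ) (D R : ℝ)
    (q : Fin m × X × Y × Z → ℝ) (h : Good P d D R 0 q) : Rmin P d D ≤ R := by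
  obtain ⟨hXY, h0, h1, h2⟩ := good_zero P hP d D R q h
  obtain ⟨hq, hsup, -, -, -, hd⟩ := h
  have hne : Nonempty (Fin m × X × Y × Z) := by
    by_contra hne
    rw [not_nonempty_iff] at hne
    have := hq.2
    simp at this
  obtain ⟨t0⟩ := hne
  have : Nonempty (Fin m) := ⟨t0.1⟩
  have : Nonempty Z := ⟨t0.2.2.2⟩
  obtain ⟨PS, hPS, hPS'⟩ := exists_kernel
    (fun x u => probEq q (fun t => (t.1, t.2.1)) (u, x)) (fun _ _ => pe_nonneg hq.1 _ _)
  obtain ⟨PZ, hPZ, hPZ'⟩ := exists_kernel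
    (fun (sy : Fin m × Y) z => probEq q (fun t => (t.2.2.2, (t.2.2.1, t.1))) (z, (sy.2, sy.1)))
      (fun _ _ => pe_nonneg hq.1 _ _)
  have e : q = fun q : Fin m × X × Y × Z =>
      PS q.2.1 q.1 * P (q.2.1, q.2.2.1) * PZ (q.1, q.2.2.1) q.2.2.2 := by
    refine pmf_eq_of_eq_on_supp _ _ hq (prod_pmf P hP PS PZ hPS hPZ) ?_
    intro t ht
    have a1 := (submod hq.1 _ _ _).2 h1 t ht
    have a2 := (submod hq.1 _ _ _).2 h2 t ht
    have b1 := hPS' t.2.1 t.1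
    have b2 := hPZ' (t.1, t.2.2.1) t.2.2.2
    rw [sum_pe_fst q (fun t => t.1) (fun t => t.2.1)] at b1
    rw [sum_pe_fst q (fun t => t.2.2.2) (fun t => (t.2.2.1, t.1))] at b2
    rw [← hXY]
    have c1 := pe_pos hq.1 (fun t => t.2.1) ht
    have c2 := pe_pos hq.1 (fun t => (t.2.2.1, t.1)) ht
    have c3 : probEq q (fun ω => ((ω.2.1, ω.2.2.2), (ω.2.2.1, ω.1)))
        ((t.2.1, t.2.2.2), (t.2.2.1, t.1)) = q t := by
      classical
      rw [pe_congr q _ (fun t => t) _ t (by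
        intro ω; simp only [Prod.mk.injEq, Prod.ext_iff]; tauto), pe_id]
    have c4 : probEq q (fun ω => (ω.2.2.1, ω.2.1)) (t.2.2.1, t.2.1) =
        probEq q (fun ω => (ω.2.1, ω.2.2.1)) (t.2.1, t.2.2.1) :=
      pe_congr q _ _ _ _ (by intro ω; simp only [Prod.mk.injEq]; tauto)
    have c5 : probEq q (fun ω => ((ω.2.2.1, ω.1), ω.2.1)) ((t.2.2.1, t.1), t.2.1) =
        probEq q (fun ω => (ω.2.1, (ω.2.2.1, ω.1))) (t.2.1, (t.2.2.1, t.1)) :=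
      pe_congr q _ _ _ _ (by intro ω; simp only [Prod.mk.injEq]; tauto)
    rw [c3] at a2
    rw [c4, c5] at a1
    rw [b1] at a1
    rw [b2] at a2
    have c1' := c1.ne'
    have c2' := c2.ne'
    apply mul_right_cancel₀ c1'
    apply mul_right_cancel₀ c2'
    simp only at a1 a2 ⊢
    linear_combination (probEq q (fun t => t.2.1) t.2.1) * a2 +
      (probEq q (fun t => (t.2.2.1, t.1)) (t.2.2.1, t.1) * PZ (t.1, t.2.2.1) t.2.2.2) * a1
  refine (csInf_le (rmin_bdd P hP d D) ?_).trans h0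
  refine ⟨m, PS, PZ, hPS, hPZ, ?_, ?_⟩
  · convert hd using 2
    rename_i t _
    conv_rhs => rw [e]
  · rw [← e]; rfl

end
end WZ
namespace WZ

section
variable {X Y Z : Type*} [Fintype X] [Fintype Y] [Fintype Z] {n M : ℕ}

/-- time-sharing pmf -/
def pT (n : ℕ) {Ω : Type*} (p : Ω → ℝ) : Fin n × Ω → ℝ := fun t => (1 / (n:ℝ)) * p t.2

lemma pT_sum {Ω : Type*} [Fintype Ω] (hn : 0 < n) (p : Ω → ℝ) (f : Fin n → Ω → ℝ) :
    ∑ t : Fin n × Ω, pT n p t * f t.1 t.2 = (1 / (n:ℝ)) * ∑ ω, p ω * ∑ i, f i ω := by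
  rw [Fintype.sum_prod_type, Finset.sum_comm, Finset.mul_sum]
  refine Finset.sum_congr rfl fun ω _ => ?_
  simp only [pT, Finset.mul_sum]
  exact Finset.sum_congr rfl fun i _ => by ring

lemma pT_nonneg {Ω : Type*} {p : Ω → ℝ} (hp : ∀ ω, 0 ≤ p ω) (t : Fin n × Ω) : 0 ≤ pT n p t :=
  mul_nonneg (by positivity) (hp _)

lemma pT_one {Ω : Type*} [Fintype Ω] (hn : 0 < n) (p : Ω → ℝ) (h1 : ∑ ω, p ω = 1) :
    ∑ t : Fin n × Ω, pT n p t = 1 := by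
  have := pT_sum hn p (fun _ _ => 1)
  have hn' : (n:ℝ) ≠ 0 := by positivity
  simp only [mul_one, Finset.sum_const, Finset.card_univ, Fintype.card_fin, nsmul_eq_mul,
    ← Finset.sum_mul, h1, one_mul] at this
  rw [this]; field_simp

lemma ent_T {Ω α : Type*} [Fintype Ω] (hn : 0 < n) (p : Ω → ℝ) (hp : IsPMF p)
    (A : Fin n → Ω → α) : entOf (pT n p) (fun t => (t.1, A t.1 t.2)) =
      (1 / (n:ℝ)) * ∑ i, entOf p (A i) + Real.logb 2 n := by
  have hn' : (n:ℝ) ≠ 0 := by positivity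
  rw [ent_slice]
  have : ∀ i, entOf (fun v => pT n p (i, v)) (A i) =
      (1 / (n:ℝ)) * entOf p (A i) + (1 / (n:ℝ)) * Real.logb 2 n := by
    intro i
    have := ent_smul p (A i) (1 / (n:ℝ)) (by positivity) hp.1
    simp only [pT]
    rw [this, hp.2, one_div, Real.logb_inv]; ring
  simp only [this, Finset.sum_add_distrib, ← Finset.mul_sum]
  simp only [Finset.sum_const, Finset.card_univ, Fintype.card_fin, nsmul_eq_mul]
  field_simp

lemma subadd {Ω α : Type*} [Fintype Ω] [Fintype α] (hn : 0 < n) (p : Ω → ℝ) (hp : IsPMF p)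
    (A : Fin n → Ω → α) : entOf p (fun ω i => A i ω) ≤
      n * entOf (pT n p) (fun t => A t.1 t.2) := by
  classical
  have hn' : (0:ℝ) < n := by positivity
  set Q := probEq (pT n p) (fun t : Fin n × Ω => A t.1 t.2) with hQ
  have hQ0 : ∀ a, 0 ≤ Q a := pe_nonneg (pT_nonneg hp.1) _
  have hQ1 : ∑ a, Q a = 1 := by rw [hQ, sum_pe, pT_one hn p hp.2]
  have hpos : ∀ ω, 0 < p ω → ∀ i, 0 < Q (A i ω) := by
    intro ω h i
    exact pe_pos (pT_nonneg hp.1) (fun t : Fin n × Ω => A t.1 t.2) (ω := (i, ω))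
      (mul_pos (by positivity) h)
  have g := (gibbs hp.1 (fun ω i => A i ω) (fun w : Fin n → α => ∏ i, Q (w i))
    (fun w => Finset.prod_nonneg fun i _ => hQ0 _)
    (by rw [← Fintype.sum_pow, hQ1, hp.2, one_pow])
    (fun ω h => Finset.prod_pos fun i _ => hpos ω h i)).1
  refine g.trans (le_of_eq ?_)
  unfold entOf
  rw [pT_sum hn p (fun i ω => Real.logb 2 (Q (A i ω)))]
  have : ∑ ω, p ω * Real.logb 2 (∏ i, Q (A i ω)) = ∑ ω, p ω * ∑ i, Real.logb 2 (Q (A i ω)) := by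
    refine Finset.sum_congr rfl fun ω _ => ?_
    rcases (hp.1 ω).eq_or_lt with h | h
    · simp [← h]
    · rw [Real.logb_prod _ _ (fun i _ => (hpos ω h i).ne')]
  rw [this]
  field_simp

/-- partial observation -/
def S (φ : (Fin n → X) → Fin M) (a b : ℕ) (ω : (Fin n → X) × (Fin n → Y)) :
    (Fin n → Option X) × (Fin n → Option Y) × Fin M :=
  (fun k => if (k:ℕ) < a then some (ω.1 k) else none,
   fun k => if b ≤ (k:ℕ) then some (ω.2 k) else none, φ ω.1)

lemma S_iff (φ : (Fin n → X) → Fin M) (a b : ℕ) (ω ω' : (Fin n → X) × (Fin n → Y)) :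
    S φ a b ω = S φ a b ω' ↔ (∀ k : Fin n, (k:ℕ) < a → ω.1 k = ω'.1 k) ∧
      (∀ k : Fin n, b ≤ (k:ℕ) → ω.2 k = ω'.2 k) ∧ φ ω.1 = φ ω'.1 := by
  unfold S
  simp only [Prod.mk.injEq, funext_iff]
  refine and_congr (forall_congr' fun k => ?_) (and_congr (forall_congr' fun k => ?_) Iff.rfl)
  · by_cases h : (k:ℕ) < a <;> simp [h]
  · by_cases h : b ≤ (k:ℕ) <;> simp [h]

lemma all_lt_succ {p : Fin n → Prop} (i : Fin n) :
    (∀ k : Fin n, (k:ℕ) < (i:ℕ) + 1 → p k) ↔ (∀ k : Fin n, (k:ℕ) < i → p k) ∧ p i := by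
  constructor
  · intro h; exact ⟨fun k hk => h k (by omega), h i (by omega)⟩
  · rintro ⟨h, h'⟩ k hk
    rcases Nat.lt_succ_iff_lt_or_eq.1 hk with h1 | h1
    · exact h k h1
    · rw [Fin.ext h1]; exact h'

lemma all_ge {p : Fin n → Prop} (i : Fin n) :
    (∀ k : Fin n, (i:ℕ) ≤ k → p k) ↔ (∀ k : Fin n, (i:ℕ) + 1 ≤ k → p k) ∧ p i := by
  constructor
  · intro h; exact ⟨fun k hk => h k (by omega), h i (by omega)⟩
  · rintro ⟨h, h'⟩ k hk
    rcases Nat.eq_or_lt_of_le hk with h1 | h1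
    · rw [← Fin.ext h1]; exact h'
    · exact h k h1

lemma nletter (hn : 0 < n) (P : X × Y → ℝ) (hP : IsPMF P) (d : X → Z → ℝ) (D R L : ℝ)
    (φ : (Fin n → X) → Fin M) (g : Fin M → (Fin n → Y) → (Fin n → Z))
    (hM : (M:ℝ) ≤ 2 ^ ((n:ℝ) * R))
    (p : (Fin n → X) × (Fin n → Y) → ℝ) (hp : IsPMF p)
    (hsup : ∀ ω, 0 < p ω → ∀ i, 0 < P (ω.1 i, ω.2 i))
    (hdist : ∀ ω, 0 < p ω → ∑ i, d (ω.1 i) (g (φ ω.1) ω.2 i) ≤ n * D)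
    (hent : entOf p (fun ω => ω) = -∑ ω, p ω * ∑ i, Real.logb 2 (P (ω.1 i, ω.2 i)) - L) :
    ∃ q : (Fin n × (Fin n → Option X) × (Fin n → Option Y) × Fin M) × X × Y × Z → ℝ,
      Good P d D R (L / n) q := by
  classical
  have hn' : (0:ℝ) < n := by positivity
  set V : Fin n × ((Fin n → X) × (Fin n → Y)) →
      (Fin n × (Fin n → Option X) × (Fin n → Option Y) × Fin M) × X × Y × Z := fun t =>
    ((t.1, S φ t.1 (t.1 + 1) t.2), t.2.1 t.1, t.2.2 t.1, g (φ t.2.1) t.2.2 t.1) with hV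
  set q := probEq (pT n p) V with hq
  have hT0 : ∀ t, 0 ≤ pT n p t := pT_nonneg hp.1
  have hq0 : ∀ t, 0 ≤ q t := pe_nonneg hT0 V
  have hq1 : ∑ t, q t = 1 := by rw [hq, sum_pe, pT_one hn p hp.2]
  set HX := entOf p (fun ω => ω.1) with hHX
  set HY := entOf p (fun ω => ω.2) with hHY
  set HXY := entOf p (fun ω => ω) with hHXY
  set HYM := entOf p (S φ 0 0) with hHYM
  -- single-letter entropies
  have sX : HX ≤ n * entOf q (fun t => t.2.1) := by
    rw [hq, ent_push]
    exact subadd hn p hp (fun i ω => ω.1 i)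
  have sY : HY ≤ n * entOf q (fun t => t.2.2.1) := by
    rw [hq, ent_push]
    exact subadd hn p hp (fun i ω => ω.2 i)
  -- cross-entropy
  have hlog : ∑ t, q t * Real.logb 2 (P (t.2.1, t.2.2.1)) =
      (1 / (n:ℝ)) * ∑ ω, p ω * ∑ i, Real.logb 2 (P (ω.1 i, ω.2 i)) := by
    rw [hq, sum_pe_mul (pT n p) V (fun t => Real.logb 2 (P (t.2.1, t.2.2.1)))]
    exact pT_sum hn p (fun i ω => Real.logb 2 (P (ω.1 i, ω.2 i)))
  have hC : -(∑ t, q t * Real.logb 2 (P (t.2.1, t.2.2.1))) = (HXY + L) / n := by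
    rw [hlog, hent]; field_simp; ring
  have hsupq : ∀ t, P (t.2.1, t.2.2.1) = 0 → q t = 0 := by
    intro t ht
    rw [hq, pe_def]
    refine Finset.sum_eq_zero fun s _ => ?_
    split_ifs with h
    · rcases (hp.1 s.2).eq_or_lt with h' | h'
      · simp [pT, ← h']
      · have := hsup s.2 h' s.1
        rw [← h] at ht
        simp only [hV] at ht
        linarith
    · rfl
  have hCge : entOf q (fun t => (t.2.1, t.2.2.1)) ≤
      -(∑ t, q t * Real.logb 2 (P (t.2.1, t.2.2.1))) :=
    (gibbs hq0 (fun t => (t.2.1, t.2.2.1)) P hP.1 (by rw [hP.2, hq1])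
      (fun t ht => lt_of_le_of_ne (hP.1 _) (fun h => by have := hsupq t h.symm; linarith))).1
  have sXY : HXY ≤ n * entOf q (fun t => (t.2.1, t.2.2.1)) := by
    rw [hq, ent_push]
    refine le_trans (le_of_eq ?_) (subadd hn p hp (fun i ω => (ω.1 i, ω.2 i)))
    apply ent_congr
    intro ω ω'
    simp only [funext_iff, Prod.mk.injEq, Prod.ext_iff, forall_and]
  -- conditional-type entropies
  have eX : entOf q (fun t => (t.1, t.2.1)) =
      (1 / (n:ℝ)) * ∑ i : Fin n, entOf p (S φ ((i:ℕ) + 1) ((i:ℕ) + 1)) + Real.logb 2 n := by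
    rw [hq, ent_push, ← ent_T hn p hp (fun i => S φ ((i:ℕ) + 1) ((i:ℕ) + 1))]
    apply ent_congr
    rintro ⟨i, ω⟩ ⟨j, ω'⟩
    simp only [hV, Prod.mk.injEq, and_assoc]
    refine and_congr_right fun hij => ?_
    subst hij
    rw [S_iff, S_iff, all_lt_succ]
    tauto
  have eY : entOf q (fun t => (t.1, t.2.2.1)) =
      (1 / (n:ℝ)) * ∑ i : Fin n, entOf p (S φ (i:ℕ) (i:ℕ)) + Real.logb 2 n := by
    rw [hq, ent_push, ← ent_T hn p hp (fun i => S φ (i:ℕ) (i:ℕ))]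
    apply ent_congr
    rintro ⟨i, ω⟩ ⟨j, ω'⟩
    simp only [hV, Prod.mk.injEq, and_assoc]
    refine and_congr_right fun hij => ?_
    subst hij
    rw [S_iff, S_iff, all_ge]
    tauto
  set B : Fin n → ((Fin n → X) × (Fin n → Y)) → Z × Y ×
      ((Fin n → Option X) × (Fin n → Option Y) × Fin M) :=
    fun i ω => (g (φ ω.1) ω.2 i, ω.2 i, S φ i (i + 1) ω) with hB
  have eZY : entOf q (fun t => (t.1, (t.2.2.2, t.2.2.1))) =
      (1 / (n:ℝ)) * ∑ i : Fin n, entOf p (B i) + Real.logb 2 n := by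
    rw [hq, ent_push, ← ent_T hn p hp B]
    apply ent_congr
    rintro ⟨i, ω⟩ ⟨j, ω'⟩
    simp only [hV, hB, Prod.mk.injEq, and_assoc]
    refine and_congr_right fun hij => ?_
    subst hij
    tauto
  have eXYZ : entOf q (fun t => (t.1, t.2)) =
      (1 / (n:ℝ)) * ∑ i : Fin n, entOf p (fun ω => (ω.1 i, B i ω)) + Real.logb 2 n := by
    rw [hq, ent_push, ← ent_T hn p hp (fun i ω => (ω.1 i, B i ω))]
    apply ent_congr
    rintro ⟨i, ω⟩ ⟨j, ω'⟩
    simp only [hV, hB, Prod.mk.injEq, and_assoc]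
    refine and_congr_right fun hij => ?_
    subst hij
    tauto
  -- telescoping
  have tele : ∀ F : ℕ → ℝ, ∑ i : Fin n, F ((i:ℕ) + 1) - ∑ i : Fin n, F (i:ℕ) = F n - F 0 := by
    intro F
    rw [← Finset.sum_sub_distrib, Fin.sum_univ_eq_sum_range (fun i => F (i + 1) - F i),
      Finset.sum_range_sub]
  have t1 := tele (fun k => entOf p (S φ k k))
  have t2 := tele (fun k => entOf p (S φ k 0))
  have k1 : entOf p (S φ n n) = HX := by
    apply ent_congr
    intro ω ω'
    rw [S_iff]
    constructor
    · rintro ⟨h, -, -⟩; exact funext fun k => h k k.2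
    · intro h
      exact ⟨fun k _ => by rw [h], fun k hk => absurd k.2 (by omega), by rw [h]⟩
  have k2 : entOf p (S φ n 0) = HXY := by
    apply ent_congr
    intro ω ω'
    rw [S_iff]
    constructor
    · rintro ⟨h, h', -⟩
      exact Prod.ext (funext fun k => h k k.2) (funext fun k => h' k (Nat.zero_le _))
    · intro h
      exact ⟨fun k _ => by rw [h], fun k hk => by rw [h], by rw [h]⟩
  have sub : ∀ i : Fin n, entOf p (S φ ((i:ℕ) + 1) 0) + entOf p (B i) ≤
      entOf p (fun ω => (ω.1 i, B i ω)) + entOf p (S φ (i:ℕ) 0) := by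
    intro i
    have := submod' hp.1 (fun ω => ω.1 i) (S φ (i:ℕ) 0) (B i)
    have hBS : ∀ ω ω' : (Fin n → X) × (Fin n → Y), S φ (i:ℕ) 0 ω = S φ (i:ℕ) 0 ω' →
        B i ω = B i ω' := by
      intro ω ω' h
      rw [S_iff] at h
      have hy : ω.2 = ω'.2 := funext fun k => h.2.1 k (Nat.zero_le _)
      simp only [hB, Prod.mk.injEq]
      refine ⟨by rw [h.2.2, hy], by rw [hy], ?_⟩
      rw [S_iff]
      exact ⟨h.1, fun k _ => by rw [hy], h.2.2⟩
    have c1 : entOf p (fun ω => (S φ (i:ℕ) 0 ω, B i ω)) = entOf p (S φ (i:ℕ) 0) := by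
      apply ent_congr
      intro ω ω'
      simp only [Prod.mk.injEq]
      exact ⟨fun h => h.1, fun h => ⟨h, hBS _ _ h⟩⟩
    have c2 : entOf p (fun ω => ((ω.1 i, S φ (i:ℕ) 0 ω), B i ω)) =
        entOf p (S φ ((i:ℕ) + 1) 0) := by
      apply ent_congr
      intro ω ω'
      have : (ω.1 i = ω'.1 i ∧ S φ (i:ℕ) 0 ω = S φ (i:ℕ) 0 ω') ↔
          S φ ((i:ℕ) + 1) 0 ω = S φ ((i:ℕ) + 1) 0 ω' := by
        rw [S_iff, S_iff, all_lt_succ]; tauto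
      rw [← this]
      simp only [Prod.mk.injEq]
      exact ⟨fun h => h.1, fun h => ⟨h, hBS _ _ h.2⟩⟩
    rw [c1, c2] at this
    exact this
  have subS : ∑ i : Fin n, entOf p (S φ ((i:ℕ) + 1) 0) + ∑ i, entOf p (B i) ≤
      ∑ i : Fin n, entOf p (fun ω => (ω.1 i, B i ω)) + ∑ i : Fin n, entOf p (S φ (i:ℕ) 0) := by
    rw [← Finset.sum_add_distrib, ← Finset.sum_add_distrib]
    exact Finset.sum_le_sum fun i _ => sub i
  -- message entropy
  have hHM : entOf p (fun ω => φ ω.1) ≤ n * R := by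
    have hMpos : 0 < M := by
      by_contra h
      have h0 : M = 0 := by omega
      subst h0
      have : IsEmpty ((Fin n → X) × (Fin n → Y)) := ⟨fun ω => (φ ω.1).elim0⟩
      have := hp.2
      simp at this
    have hMpos' : (0:ℝ) < M := by exact_mod_cast hMpos
    have := (gibbs hp.1 (fun ω => φ ω.1) (fun _ => 1 / (M:ℝ)) (fun _ => by positivity)
      (by rw [hp.2]; simp [hMpos'.ne']) (fun _ _ => by positivity)).1
    rw [← Finset.sum_mul, hp.2, one_mul, one_div, Real.logb_inv, neg_neg] at this
    refine this.trans ?_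
    rw [Real.logb_le_iff_le_rpow (by norm_num) hMpos']
    exact hM
  have hYM : HYM ≤ HY + n * R := by
    have := submod' hp.1 (fun ω => φ ω.1) (fun ω => ω.2) (fun _ => ())
    have c0 : entOf p (fun _ => ()) = 0 := by
      unfold entOf
      have : probEq p (fun _ => ()) () = 1 := by rw [pe_def]; simpa using hp.2
      simp [this]
    have c1 : entOf p (fun ω => (φ ω.1, ())) = entOf p (fun ω => φ ω.1) := by
      apply ent_congr; intro ω ω'; simp
    have c2 : entOf p (fun ω => (ω.2, ())) = HY := by
      apply ent_congr; intro ω ω'; simp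
    have c3 : entOf p (fun ω => ((φ ω.1, ω.2), ())) = HYM := by
      apply ent_congr
      intro ω ω'
      rw [S_iff]
      simp only [Prod.mk.injEq, and_true, funext_iff, Nat.not_lt_zero, IsEmpty.forall_iff,
        implies_true, Nat.zero_le, true_and, forall_const]
      tauto
    rw [c0, c1, c2, c3] at this
    linarith
  -- assembling
  have n2 : 0 ≤ I2 q := (submod hq0 _ _ _).1
  have n1 : 0 ≤ I1 q := (submod hq0 _ _ _).1
  rw [k1] at t1
  rw [k2] at t2
  set E := entOf q (fun t => (t.2.1, t.2.2.1)) with hE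
  set EX := entOf q (fun t => t.2.1)
  set EY := entOf q (fun t => t.2.2.1)
  have hCn : n * E ≤ HXY + L := by
    have := hCge; rw [hC, le_div_iff₀ hn'] at this; linarith
  have dX : n * (entOf q (fun t => (t.1, t.2.1)) - entOf q (fun t => (t.1, t.2.2.1))) =
      HX - HYM := by
    rw [eX, eY, ← t1]; field_simp; ring
  have dZ : HXY - HYM ≤ n * (entOf q (fun t => (t.1, t.2)) -
      entOf q (fun t => (t.1, (t.2.2.2, t.2.2.1)))) := by
    have : n * (entOf q (fun t => (t.1, t.2)) -
      entOf q (fun t => (t.1, (t.2.2.2, t.2.2.1)))) =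
      ∑ i : Fin n, entOf p (fun ω => (ω.1 i, B i ω)) - ∑ i, entOf p (B i) := by
      rw [eXYZ, eZY]; field_simp; ring
    rw [this]; linarith
  have hI12 : n * (I1 q + I2 q) ≤ L := by
    rw [I12_eq]
    have : n * (E - EX + entOf q (fun t => (t.1, t.2.1)) +
        entOf q (fun t => (t.1, (t.2.2.2, t.2.2.1))) - entOf q (fun t => (t.1, t.2.2.1)) -
        entOf q (fun t => (t.1, t.2))) = n * E - n * EX +
        n * (entOf q (fun t => (t.1, t.2.1)) - entOf q (fun t => (t.1, t.2.2.1))) -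
        n * (entOf q (fun t => (t.1, t.2)) -
          entOf q (fun t => (t.1, (t.2.2.2, t.2.2.1)))) := by ring
    rw [this, dX]
    linarith
  have hI2e : I2 q = entOf q (fun t => (t.1, (t.2.1, t.2.2.1))) +
      entOf q (fun t => (t.1, (t.2.2.2, t.2.2.1)))
      - entOf q (fun t => (t.1, t.2.2.1)) - entOf q (fun t => (t.1, t.2)) := by
    unfold I2 condMIOf condEntOf
    rw [ent_congr q (fun ω => ((ω.2.2.1, ω.1))) (fun t => (t.1, t.2.2.1))
        (by intro a b; simp only [Prod.mk.injEq]; tauto),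
      ent_congr q (fun ω => (ω.2.2.2, ω.2.2.1, ω.1)) (fun t => (t.1, (t.2.2.2, t.2.2.1)))
        (by intro a b; simp only [Prod.mk.injEq]; tauto),
      ent_congr q (fun ω => (ω.2.1, ω.2.2.1, ω.1)) (fun t => (t.1, (t.2.1, t.2.2.1)))
        (by intro a b; simp only [Prod.mk.injEq]; tauto),
      ent_congr q (fun ω => ((ω.2.1, ω.2.2.2), ω.2.2.1, ω.1)) (fun t => (t.1, t.2))
        (by intro a b; simp only [Prod.ext_iff]; tauto)]
    ring
  have hI0 : n * I0 q ≤ n * R + L := by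
    rw [I0_eq]
    have hc : n * (entOf q (fun t => (t.1, t.2)) -
      entOf q (fun t => (t.1, (t.2.2.2, t.2.2.1)))) ≤
      n * (entOf q (fun t => (t.1, (t.2.1, t.2.2.1))) - entOf q (fun t => (t.1, t.2.2.1))) := by
      apply mul_le_mul_of_nonneg_left _ hn'.le
      linarith
    have : n * (E - EY + entOf q (fun t => (t.1, t.2.2.1)) -
        entOf q (fun t => (t.1, (t.2.1, t.2.2.1)))) = n * E - n * EY -
        n * (entOf q (fun t => (t.1, (t.2.1, t.2.2.1))) - entOf q (fun t => (t.1, t.2.2.1))) := by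
      ring
    rw [this]
    linarith
  refine ⟨q, ⟨hq0, hq1⟩, hsupq, ?_, ?_, ?_, ?_⟩
  · have : R + L / n = (n * R + L) / n := by field_simp
    rw [this, le_div_iff₀ hn']; linarith
  · rw [le_div_iff₀ hn']; linarith
  · rw [hC, sub_le_iff_le_add, div_le_iff₀ hn']
    have : (L / n + E) * n = L + n * E := by field_simp
    rw [this]; linarith
  · rw [hq, sum_pe_mul (pT n p) V (fun t => d t.2.1 t.2.2.2)]
    rw [pT_sum hn p (fun i ω => d (ω.1 i) (g (φ ω.1) ω.2 i))]
    have : ∑ ω, p ω * ∑ i, d (ω.1 i) (g (φ ω.1) ω.2 i) ≤ ∑ ω, p ω * (n * D) := by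
      refine Finset.sum_le_sum fun ω _ => ?_
      rcases (hp.1 ω).eq_or_lt with h | h
      · simp [← h]
      · exact mul_le_mul_of_nonneg_left (hdist ω h) h.le
    rw [← Finset.sum_mul, hp.2, one_mul] at this
    rw [one_div, inv_mul_le_iff₀ hn']
    exact this

end
end WZ
namespace WZ

section
variable {X Y Z : Type*} [Fintype X] [Fintype Y] [Fintype Z]

lemma iid_sum (P : X × Y → ℝ) (hP : IsPMF P) (n : ℕ) :
    ∑ xy : (Fin n → X) × (Fin n → Y), iidPair P n xy = 1 := by
  classical
  rw [← (Equiv.arrowProdEquivProdArrow (Fin n) (fun _ => X) (fun _ => Y)).sum_comp]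
  have : ∀ w : Fin n → X × Y, iidPair P n
      (Equiv.arrowProdEquivProdArrow (Fin n) (fun _ => X) (fun _ => Y) w) = ∏ i, P (w i) :=
    fun w => rfl
  simp only [this]
  rw [← Fintype.sum_pow, hP.2, one_pow]

lemma iid_nonneg (P : X × Y → ℝ) (hP : IsPMF P) (n : ℕ) (xy : (Fin n → X) × (Fin n → Y)) :
    0 ≤ iidPair P n xy := Finset.prod_nonneg fun i _ => hP.1 _

open Classical in
lemma exists_good {n M : ℕ} (hn : 0 < n) (P : X × Y → ℝ) (hP : IsPMF P) (d : X → Z → ℝ) (D R : ℝ)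
    (φ : (Fin n → X) → Fin M) (g : Fin M → (Fin n → Y) → (Fin n → Z))
    (hM : (M:ℝ) ≤ 2 ^ ((n:ℝ) * R)) (b : ℝ)
    (hb : b = ∑ xy : (Fin n → X) × (Fin n → Y),
        if D < (∑ i, d (xy.1 i) (g (φ xy.1) xy.2 i)) / n then iidPair P n xy else 0)
    (hb1 : b < 1) :
    ∃ q : (Fin n × (Fin n → Option X) × (Fin n → Option Y) × Fin M) × X × Y × Z → ℝ,
      Good P d D R ((-Real.logb 2 (1 - b)) / n) q := by
  have hn' : (0:ℝ) < n := by positivity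
  have hΔ : 0 < 1 - b := by linarith
  set p : (Fin n → X) × (Fin n → Y) → ℝ := fun xy =>
    if D < (∑ i, d (xy.1 i) (g (φ xy.1) xy.2 i)) / n then 0 else iidPair P n xy / (1 - b) with hpd
  have hp0 : ∀ ω, 0 ≤ p ω := by
    intro ω
    simp only [hpd]
    split_ifs
    · exact le_rfl
    · exact div_nonneg (iid_nonneg P hP n ω) hΔ.le
  have hp1 : ∑ ω, p ω = 1 := by
    have : ∀ ω, p ω = (iidPair P n ω -
        if D < (∑ i, d (ω.1 i) (g (φ ω.1) ω.2 i)) / n then iidPair P n ω else 0) / (1 - b) := by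
      intro ω
      simp only [hpd]
      split_ifs <;> simp
    simp only [this]
    rw [← Finset.sum_div, Finset.sum_sub_distrib, iid_sum P hP, ← hb, div_self hΔ.ne']
  have hval : ∀ ω, 0 < p ω → ¬ D < (∑ i, d (ω.1 i) (g (φ ω.1) ω.2 i)) / n ∧
      p ω = iidPair P n ω / (1 - b) := by
    intro ω h
    by_cases hc : D < (∑ i, d (ω.1 i) (g (φ ω.1) ω.2 i)) / n
    · simp [hpd, hc] at h
    · exact ⟨hc, by simp [hpd, hc]⟩
  have hsup : ∀ ω, 0 < p ω → ∀ i, 0 < P (ω.1 i, ω.2 i) := by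
    intro ω h i
    refine lt_of_le_of_ne (hP.1 _) (fun h0 => ?_)
    have : iidPair P n ω = 0 := Finset.prod_eq_zero (Finset.mem_univ i) h0.symm
    rw [(hval ω h).2, this] at h
    simp at h
  refine nletter hn P hP d D R _ φ g hM p ⟨hp0, hp1⟩ hsup ?_ ?_
  · intro ω h
    have := (hval ω h).1
    rw [not_lt, div_le_iff₀ hn'] at this
    linarith
  · have e : ∑ ω, p ω * Real.logb 2 (p ω) =
        ∑ ω, (p ω * ∑ i, Real.logb 2 (P (ω.1 i, ω.2 i)) - p ω * Real.logb 2 (1 - b)) := by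
      refine Finset.sum_congr rfl fun ω _ => ?_
      rcases (hp0 ω).eq_or_lt with h | h
      · simp [← h]
      · have hi : iidPair P n ω ≠ 0 := (Finset.prod_pos fun i _ => hsup ω h i).ne'
        rw [(hval ω h).2, Real.logb_div hi hΔ.ne']
        unfold iidPair
        rw [Real.logb_prod _ _ (fun i _ => (hsup ω h i).ne')]
        ring
    unfold entOf
    simp only [pe_id]
    rw [e, Finset.sum_sub_distrib, ← Finset.sum_mul, hp1]
    ring

lemma exists_good_K (P : X × Y → ℝ) (hP : IsPMF P) (d : X → Z → ℝ) (D ε R : ℝ) (hε1 : ε < 1)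
    (hε0 : 0 ≤ ε) (hach : wzAchievable P d D R ε) (δ : ℝ) (hδ : 0 < δ) :
    ∃ q : Fin (Fintype.card (X × Y × Z) + 1) × X × Y × Z → ℝ, Good P d D R δ q := by
  classical
  obtain ⟨hR, M, φ, g, hM, hlim⟩ := hach
  set b : ℕ → ℝ := fun n => ∑ xy : (Fin n → X) × (Fin n → Y),
        if D < (∑ i, d (xy.1 i) (g n (φ n xy.1) xy.2 i)) / n
        then iidPair P n xy else 0 with hb
  have hlim' : limsup b atTop ≤ ε := by
    convert hlim using 6
  have hbb : ∀ n, b n ≤ 1 := by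
    intro n
    rw [← iid_sum P hP n]
    refine Finset.sum_le_sum fun xy _ => ?_
    split_ifs
    · exact le_rfl
    · exact iid_nonneg P hP n xy
  have hev : ∀ᶠ n in atTop, b n < (1 + ε) / 2 :=
    eventually_lt_of_limsup_lt (by linarith) (isBoundedUnder_of ⟨1, hbb⟩)
  set L0 := -Real.logb 2 ((1 - ε) / 2) with hL0
  have hL0p : 0 < L0 := by
    rw [hL0, neg_pos]
    exact Real.logb_neg (by norm_num) (by linarith) (by linarith)
  set l := (R + δ) / δ with hl
  have hlp : 0 < l := by positivity
  have ht : Tendsto (fun n : ℕ => (1 + l) * L0 / (n:ℝ)) atTop (nhds 0) :=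
    tendsto_const_div_atTop_nhds_zero_nat _
  obtain ⟨n, h1, h2, h3⟩ := (hev.and ((ht.eventually (gt_mem_nhds hδ)).and
    (eventually_gt_atTop 0))).exists
  have hn' : (0:ℝ) < n := by exact_mod_cast h3
  obtain ⟨q, hq⟩ := exists_good h3 P hP d D R (φ n) (g n) (hM n) (b n) rfl (by linarith)
  have hL : -Real.logb 2 (1 - b n) ≤ L0 := by
    rw [hL0]
    apply neg_le_neg
    exact Real.logb_le_logb_of_le (by norm_num) (by linarith) (by linarith)
  have hη : (-Real.logb 2 (1 - b n)) / n ≤ L0 / n := div_le_div_of_nonneg_right hL hn'.le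
  have h2' : (1 + l) * (L0 / n) < δ := by rw [← mul_div_assoc]; exact h2
  have hLn : 0 < L0 / n := by positivity
  refine good_reduce P d D R δ _ l q hq hlp ?_ ?_ ?_
  · nlinarith
  · rw [hl, div_mul_cancel₀ _ hδ.ne']
  · nlinarith

end
end WZ
/-- For every `ε ∈ [0,1)` and every `ε`-achievable rate `R` in the
Wyner–Ziv problem, there exists a pmf `P* = P*_{UXYZ}` on `𝒰×𝒳×𝒴×𝒵` with
`|𝒰| ≤ |𝒳|·|𝒴|·|𝒵| + 1` and `P*_{XY} = P_{XY}` such that `R ≥ I_{P*}(X;U|Y)`,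
`I_{P*}(Y;U|X) = 0`, `I_{P*}(X;Z|Y,U) = 0`, and `E_{P*}[d(X,Z)] ≤ D`;
in particular `R ≥ R_min`. -/
theorem wyner_ziv_converse_auxiliary
    {X Y Z : Type*} [Fintype X] [Fintype Y] [Fintype Z]
    (P : X × Y → ℝ) (hP : IsPMF P)
    (d : X → Z → ℝ) (hd : ∀ x z, 0 ≤ d x z) (D : ℝ) (hD : 0 < D)
    (ε : ℝ) (hε0 : 0 ≤ ε) (hε1 : ε < 1)
    (R : ℝ) (hach : wzAchievable P d D R ε) :
    (∃ m : ℕ, m ≤ Fintype.card X * Fintype.card Y * Fintype.card Z + 1 ∧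
      ∃ Pstar : Fin m × X × Y × Z → ℝ, IsPMF Pstar ∧
        (∀ x y, probEq Pstar (fun q => (q.2.1, q.2.2.1)) (x, y) = P (x, y)) ∧
        condMIOf Pstar (fun q => q.2.1) (fun q => q.1) (fun q => q.2.2.1) ≤ R ∧
        condMIOf Pstar (fun q => q.2.2.1) (fun q => q.1) (fun q => q.2.1) = 0 ∧
        condMIOf Pstar (fun q => q.2.1) (fun q => q.2.2.2)
          (fun q => (q.2.2.1, q.1)) = 0 ∧
        (∑ q, Pstar q * d q.2.1 q.2.2.2) ≤ D) ∧
    Rmin P d D ≤ R := by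
  obtain ⟨q, hq⟩ := WZ.good_limit P d D R
    (fun δ hδ => WZ.exists_good_K P hP d D ε R hε1 hε0 hach δ hδ)
  obtain ⟨hXY, h0, h1, h2⟩ := WZ.good_zero P hP d D R q hq
  refine ⟨⟨_, ?_, q, hq.1, hXY, h0, h1, h2, hq.2.2.2.2.2⟩, WZ.rmin_le P hP d D R q hq⟩
  rw [Fintype.card_prod, Fintype.card_prod, mul_assoc]
end
end
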